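/- arXiv:2001.04676 — 2 statements merged into one kernel-verified Lean document; each statement's English description precedes it below -/
import Mathlib

section
/- Suppose there exist real numbers s, t > 2 with (s−2)(t−2) ≥ 4 such that E[w(Θ, X, Z_1)^s] < ∞ and E[|log w(Θ, X, Z_1)|^t] < ∞. Then there exists a constant c > 0 such that for every ℓ ≥ 1, Var[Δ_ℓ] ≤ c·2^{−βℓ} with β = min(s(t−2)/(2t), 2), and for every ℓ ≥ 0 the bias satisfies |E[log Ȳ_{2^ℓ}]| ≤ c·2^{−αℓ} with α = min(s(t−1)/(2t), 1). (These are the MLMC rate constants for estimating the locally marginalized evidence lower bound, whose estimator differs from log Ȳ_K only by a term not depending on the inner samples.) -/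
open MeasureTheory ProbabilityTheory Finset
open scoped ENNReal

noncomputable section

/-- Expectation of a functional `f` of a global parameter `θ ~ r`, a data point `x ~ ν`
(independent of `θ`), and `n` samples drawn i.i.d. (conditionally on `x`) from the
proposal kernel `q`. -/
def jointExp3 {Θ 𝒳 𝒵 : Type*} [MeasurableSpace Θ] [MeasurableSpace 𝒳] [MeasurableSpace 𝒵]
    (r : Measure Θ) (ν : Measure 𝒳) (q : Kernel 𝒳 𝒵) (n : ℕ)
    (f : Θ → 𝒳 → (Fin n → 𝒵) → ℝ) : ℝ :=
  ∫ θ, ∫ x, ∫ zs, f θ x zs ∂(Measure.pi fun _ : Fin n => q x) ∂ν ∂r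

/-- The coupled level correction `Δ = log Ȳ_{2n} − ½(log Ȳₙ⁽ᵃ⁾ + log Ȳₙ⁽ᵇ⁾)` for the
locally marginalized evidence lower bound, where the averages `Ȳ` of the weights
`w θ x ·` are over all `2n` samples, the first `n`, and the last `n` respectively. -/
def mlmcCorrection3 {Θ 𝒳 𝒵 : Type*} (w : Θ → 𝒳 → 𝒵 → ℝ) (n : ℕ) (θ : Θ) (x : 𝒳)
    (zs : Fin (2 * n) → 𝒵) : ℝ :=
  Real.log ((∑ k, w θ x (zs k)) / (2 * n))
    - (Real.log ((∑ k : Fin n, w θ x (zs ⟨k.1, by have := k.2; omega⟩)) / n)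
        + Real.log ((∑ k : Fin n, w θ x (zs ⟨n + k.1, by have := k.2; omega⟩)) / n)) / 2

/-!
Write `R x = x - 1 - log x`. In both quantities `log Ȳ` may be replaced by `-R(Ȳ)`: the linear part
`Ȳ - 1` has mean zero, and it cancels in the antithetic difference because `Ȳ` is the mean of its
two halves. It therefore suffices to show `E[R(Ȳ_n) ^ κ] = O(n ^ (-κr/2))`, with `κ = 1` for the
bias and `κ = 2` for the variance, for `r ∈ [1, 2]` as large as the moments permit.

For every such `r` one has `R x ≤ 4 |x - 1| ^ r (1 + (log x)⁻)`: `R` is quadratic near `1`, linear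
at infinity and logarithmic at `0`. By concavity `(log Ȳ)⁻` is at most the average of `|log w|`, so
Young's inequality with exponents `m / (κr)` and `t / κ` bounds `n ^ (κr/2) R(Ȳ_n) ^ κ` by the
`m`-th moment of `√n |Ȳ_n - 1|` plus the `t`-th moment of `1 + |log w|`. The former is bounded in
`n`: given `(Θ, X)` the summands `w - 1` are independent and centred, so the sum of any of them is
orthogonal in `L^m` to each further one, and a second-order Taylor expansion of `|·| ^ m` bounds the
moments of the sum by induction.
-/

open scoped BigOperators

/-- The constant in the second-order Taylor bound `abs_add_rpow_le` for the function `|·| ^ p`. -/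
def rpowTaylorConst (p : ℝ) : ℝ := (p + 1) ^ p + p ^ p + p ^ 2

lemma rpowTaylorConst_nonneg {p : ℝ} (hp : 0 ≤ p) : 0 ≤ rpowTaylorConst p := by
  unfold rpowTaylorConst
  positivity

lemma one_add_rpow_le_one_add_mul_add_sq {p u : ℝ} (hp : 1 ≤ p) (hu : |p * u| ≤ 1) :
    (1 + u) ^ p ≤ 1 + p * u + (p * u) ^ 2 := by
  have hu_one : |u| ≤ 1 := by
    rw [abs_mul, abs_of_nonneg (by linarith)] at hu
    nlinarith [abs_nonneg u]
  calc (1 + u) ^ p ≤ Real.exp u ^ p :=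
        Real.rpow_le_rpow (by linarith [neg_abs_le u]) (by linarith [Real.add_one_le_exp u])
          (by linarith)
    _ = Real.exp (p * u) := by rw [mul_comm, Real.exp_mul]
    _ ≤ 1 + p * u + (p * u) ^ 2 := by
        linarith [(abs_le.mp (Real.abs_exp_sub_one_sub_id_le hu)).2]

lemma abs_rpow_sub_two_mul_abs {p : ℝ} (hp : 1 < p) (x : ℝ) :
    |x| ^ (p - 2) * |x| = |x| ^ (p - 1) := by
  rw [← Real.rpow_add_one' (abs_nonneg x) (by linarith)]
  ring_nf

lemma abs_add_rpow_le_of_abs_le {p x y : ℝ} (hp : 1 < p) (h : |x| ≤ p * |y|) :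
    |x + y| ^ p ≤ p * (|x| ^ (p - 2) * x * y) + ((p + 1) ^ p + p ^ p) * |y| ^ p := by
  have hp0 : 0 < p := by linarith
  have hsum : |x + y| ^ p ≤ (p + 1) ^ p * |y| ^ p := by
    rw [← Real.mul_rpow (by positivity) (abs_nonneg y)]
    exact Real.rpow_le_rpow (abs_nonneg _) (by linarith [abs_add_le x y]) hp0.le
  have hlinear : |p * (|x| ^ (p - 2) * x * y)| ≤ p ^ p * |y| ^ p :=
    calc |p * (|x| ^ (p - 2) * x * y)| = p * (|x| ^ (p - 1) * |y|) := by
          rw [abs_mul, abs_mul, abs_mul, abs_of_pos hp0, Real.abs_rpow_of_nonneg (abs_nonneg x),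
            abs_abs, abs_rpow_sub_two_mul_abs hp]
      _ ≤ p * ((p * |y|) ^ (p - 1) * |y|) := by
          gcongr
      _ = (p ^ (p - 1) * p) * (|y| ^ (p - 1) * |y|) := by
          rw [Real.mul_rpow hp0.le (abs_nonneg y)]
          ring
      _ = p ^ p * |y| ^ p := by
          rw [← Real.rpow_add_one' hp0.le (by linarith),
            ← Real.rpow_add_one' (abs_nonneg y) (by linarith), sub_add_cancel]
  linarith [neg_abs_le (p * (|x| ^ (p - 2) * x * y))]

lemma abs_add_rpow_le_of_mul_abs_lt {p x y : ℝ} (hp : 1 ≤ p) (h : p * |y| < |x|) :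
    |x + y| ^ p ≤ |x| ^ p + p * (|x| ^ (p - 2) * x * y) + p ^ 2 * (|x| ^ (p - 2) * y ^ 2) := by
  have hx_abs : 0 < |x| := lt_of_le_of_lt (by positivity) h
  have hx : x ≠ 0 := abs_pos.mp hx_abs
  obtain ⟨u, rfl⟩ : ∃ u, y = x * u := ⟨y / x, by field_simp⟩
  have hu : |p * u| ≤ 1 := by
    rw [abs_mul] at h
    rw [abs_mul, abs_of_nonneg (by linarith)]
    nlinarith
  have hu_nonneg : 0 ≤ 1 + u := by
    rw [abs_mul, abs_of_nonneg (by linarith)] at hu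
    nlinarith [neg_abs_le u, abs_nonneg u]
  have hpow : |x| ^ p = |x| ^ (p - 2) * x ^ 2 := by
    rw [← sq_abs x, ← Real.rpow_natCast, ← Real.rpow_add hx_abs]
    norm_num
  calc |x + x * u| ^ p = |x| ^ p * (1 + u) ^ p := by
        rw [show x + x * u = x * (1 + u) by ring, abs_mul, abs_of_nonneg hu_nonneg,
          Real.mul_rpow hx_abs.le hu_nonneg]
    _ ≤ |x| ^ p * (1 + p * u + (p * u) ^ 2) := by
        gcongr
        exact one_add_rpow_le_one_add_mul_add_sq hp hu
    _ = _ := by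
        rw [hpow]
        ring

lemma abs_add_rpow_le {p : ℝ} (hp : 1 < p) (x y : ℝ) :
    |x + y| ^ p ≤ |x| ^ p + p * (|x| ^ (p - 2) * x * y)
      + rpowTaylorConst p * (|x| ^ (p - 2) * y ^ 2 + |y| ^ p) := by
  have hx : 0 ≤ |x| ^ p := by positivity
  have hxy : 0 ≤ |x| ^ (p - 2) * y ^ 2 := by positivity
  have hy : 0 ≤ |y| ^ p := by positivity
  have hc : 0 ≤ (p + 1) ^ p + p ^ p := by positivity
  unfold rpowTaylorConst
  rcases le_or_gt |x| (p * |y|) with h | h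
  · linarith [abs_add_rpow_le_of_abs_le hp h, mul_nonneg hc hxy, mul_nonneg (sq_nonneg p) hxy,
      mul_nonneg (sq_nonneg p) hy]
  · linarith [abs_add_rpow_le_of_mul_abs_lt hp.le h, mul_nonneg hc hxy, mul_nonneg hc hy,
      mul_nonneg (sq_nonneg p) hy]

lemma rpow_add_mul_le_add_rpow {x C q : ℝ} (hx : 0 ≤ x) (hC : 0 ≤ C) (hq : 1 ≤ q) :
    x ^ q + C * (x ^ (q - 1) + 1) ≤ (x + (2 * C + 1)) ^ q := by
  have hsplit : ∀ z : ℝ, 0 ≤ z → z ^ q = z ^ (q - 1) * z := fun z hz => by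
    rw [← Real.rpow_add_one' hz (by linarith), sub_add_cancel]
  have hmono : x ^ (q - 1) ≤ (x + (2 * C + 1)) ^ (q - 1) :=
    Real.rpow_le_rpow hx (by linarith) (by linarith)
  have hone : 1 ≤ (x + (2 * C + 1)) ^ (q - 1) := Real.one_le_rpow (by linarith) (by linarith)
  rw [hsplit x hx, hsplit _ (by linarith)]
  nlinarith [mul_le_mul_of_nonneg_right hmono hx, mul_le_mul_of_nonneg_left hmono hC,
    mul_le_mul_of_nonneg_left hone hC]

lemma rpow_mul_rpow_le_add {x y a b : ℝ} (hx : 0 ≤ x) (hy : 0 ≤ y) (ha : 0 ≤ a) (hb : 0 ≤ b)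
    (hab : a + b = 1) : x ^ a * y ^ b ≤ x + y :=
  calc x ^ a * y ^ b ≤ a * x + b * y := Real.geom_mean_le_arith_mean2_weighted ha hb hx hy hab
    _ ≤ 1 * x + 1 * y := by gcongr <;> linarith
    _ = x + y := by ring

lemma rpow_mul_rpow_le_rpow_add_rpow {x y a b m t : ℝ} (hx : 0 ≤ x) (hy : 0 ≤ y) (ha : 0 ≤ a)
    (hb : 0 ≤ b) (hm : 0 < m) (ht : 0 < t) (hexp : a / m + b / t = 1) :
    x ^ a * y ^ b ≤ x ^ m + y ^ t := by
  have hyoung := rpow_mul_rpow_le_add (Real.rpow_nonneg hx m) (Real.rpow_nonneg hy t)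
    (div_nonneg ha hm.le) (div_nonneg hb ht.le) hexp
  rwa [← Real.rpow_mul hx, ← Real.rpow_mul hy, mul_div_cancel₀ _ hm.ne',
    mul_div_cancel₀ _ ht.ne'] at hyoung

lemma mul_rpow_mul_rpow_of_add_eq_one {x y a b : ℝ} (hx : 0 ≤ x) (hy : 0 ≤ y) (hab : a + b = 1) :
    (x * y) ^ a * y ^ b = x ^ a * y := by
  rw [Real.mul_rpow hx hy, mul_assoc, ← Real.rpow_add' hy (by rw [hab]; exact one_ne_zero), hab,
    Real.rpow_one]

section LpMoments

variable {α : Type*} [MeasurableSpace α] {μ : Measure α}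

lemma integrable_rpow_mul_rpow {f g : α → ℝ} {a b : ℝ} (hf : Integrable f μ) (hg : Integrable g μ)
    (hf0 : 0 ≤ f) (hg0 : 0 ≤ g) (ha : 0 ≤ a) (hb : 0 ≤ b) (hab : a + b = 1) :
    Integrable (fun x => f x ^ a * g x ^ b) μ := by
  refine (hf.add hg).mono' ?_ (ae_of_all _ fun x => ?_)
  · exact ((hf.aemeasurable.pow_const a).mul (hg.aemeasurable.pow_const b)).aestronglyMeasurable
  · have hfx := hf0 x
    have hgx := hg0 x
    rw [Real.norm_of_nonneg (mul_nonneg (Real.rpow_nonneg hfx a) (Real.rpow_nonneg hgx b))]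
    exact rpow_mul_rpow_le_add hfx hgx ha hb hab

lemma integral_rpow_mul_rpow_le {f g : α → ℝ} {a b : ℝ} (hf : Integrable f μ)
    (hg : Integrable g μ) (hf0 : 0 ≤ f) (hg0 : 0 ≤ g) (ha : 0 ≤ a) (hb : 0 ≤ b) (hab : a + b = 1) :
    ∫ x, f x ^ a * g x ^ b ∂μ ≤ (∫ x, f x ∂μ) ^ a * (∫ x, g x ∂μ) ^ b := by
  have hIf : 0 ≤ ∫ x, f x ∂μ := integral_nonneg hf0
  have hIg : 0 ≤ ∫ x, g x ∂μ := integral_nonneg hg0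
  rw [← ENNReal.ofReal_le_ofReal_iff (by positivity),
    ofReal_integral_eq_lintegral_ofReal (integrable_rpow_mul_rpow hf hg hf0 hg0 ha hb hab)
      (ae_of_all _ fun x => mul_nonneg (Real.rpow_nonneg (hf0 x) a) (Real.rpow_nonneg (hg0 x) b)),
    ENNReal.ofReal_mul (by positivity), ← ENNReal.ofReal_rpow_of_nonneg hIf ha,
    ← ENNReal.ofReal_rpow_of_nonneg hIg hb,
    ofReal_integral_eq_lintegral_ofReal hf (ae_of_all _ hf0),
    ofReal_integral_eq_lintegral_ofReal hg (ae_of_all _ hg0)]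
  convert ENNReal.lintegral_mul_norm_pow_le (hf.aemeasurable.ennreal_ofReal)
    (hg.aemeasurable.ennreal_ofReal) ha hb hab using 3 with x
  rw [ENNReal.ofReal_mul (Real.rpow_nonneg (hf0 x) a), ENNReal.ofReal_rpow_of_nonneg (hf0 x) ha,
    ENNReal.ofReal_rpow_of_nonneg (hg0 x) hb]

lemma integrable_abs_rpow_of_memLp {f : α → ℝ} {p : ℝ} (hp : 0 < p)
    (hf : MemLp f (ENNReal.ofReal p) μ) : Integrable (fun x => |f x| ^ p) μ := by
  simpa [ENNReal.toReal_ofReal hp.le] using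
    hf.integrable_norm_rpow (by simpa using hp) ENNReal.ofReal_ne_top

variable {p : ℝ} {f g : α → ℝ}

lemma integrable_abs_rpow_sub_two_mul_mul (hp : 1 < p) (hf : MemLp f (ENNReal.ofReal p) μ)
    (hg : MemLp g (ENNReal.ofReal p) μ) :
    Integrable (fun x => |f x| ^ (p - 2) * f x * g x) μ := by
  have hp0 : 0 < p := by linarith
  have hdom := integrable_rpow_mul_rpow (integrable_abs_rpow_of_memLp hp0 hf)
    (integrable_abs_rpow_of_memLp hp0 hg) (fun x => by positivity) (fun x => by positivity)
    (a := (p - 1) / p) (b := 1 / p) (div_nonneg (by linarith) hp0.le) (by positivity)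
    (by field_simp; ring)
  refine hdom.mono' ?_ (ae_of_all _ fun x => le_of_eq ?_)
  · exact ((((continuous_abs.measurable.comp_aemeasurable hf.aemeasurable).pow_const _).mul
      hf.aemeasurable).mul hg.aemeasurable).aestronglyMeasurable
  · rw [Real.norm_eq_abs, abs_mul, abs_mul, Real.abs_rpow_of_nonneg (abs_nonneg _), abs_abs,
      abs_rpow_sub_two_mul_abs hp, ← Real.rpow_mul (abs_nonneg _), ← Real.rpow_mul (abs_nonneg _),
      mul_div_cancel₀ _ hp0.ne', mul_one_div_cancel hp0.ne', Real.rpow_one]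

lemma abs_rpow_sub_two_mul_sq (hp : 0 < p) (x y : ℝ) :
    |x| ^ (p - 2) * y ^ 2 = (|x| ^ p) ^ ((p - 2) / p) * (|y| ^ p) ^ (2 / p) := by
  rw [← Real.rpow_mul (abs_nonneg _), ← Real.rpow_mul (abs_nonneg _), mul_div_cancel₀ _ hp.ne',
    mul_div_cancel₀ _ hp.ne', Real.rpow_two, sq_abs]

/-- Birkhoff–James orthogonality `f ⊥ g` in `L^p(μ)`, in the form that the derivative of
`t ↦ ∫ |f + t g| ^ p ∂μ` vanishes at `0`. For `p = 2` this is orthogonality in `L²`. -/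
def LpOrthogonal (p : ℝ) (μ : Measure α) (f g : α → ℝ) : Prop :=
  ∫ x, |f x| ^ (p - 2) * f x * g x ∂μ = 0

lemma integral_abs_add_rpow_le (hp : 2 ≤ p) (hf : MemLp f (ENNReal.ofReal p) μ)
    (hg : MemLp g (ENNReal.ofReal p) μ) (hfg : LpOrthogonal p μ f g) :
    ∫ x, |f x + g x| ^ p ∂μ ≤ ∫ x, |f x| ^ p ∂μ + rpowTaylorConst p *
      ((∫ x, |f x| ^ p ∂μ) ^ ((p - 2) / p) * (∫ x, |g x| ^ p ∂μ) ^ (2 / p)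
        + ∫ x, |g x| ^ p ∂μ) := by
  have hp0 : 0 < p := by linarith
  have hf_int := integrable_abs_rpow_of_memLp hp0 hf
  have hg_int := integrable_abs_rpow_of_memLp hp0 hg
  have hf_nonneg : 0 ≤ fun x => |f x| ^ p := fun x => by positivity
  have hg_nonneg : 0 ≤ fun x => |g x| ^ p := fun x => by positivity
  have hexp : 0 ≤ (p - 2) / p := div_nonneg (by linarith) hp0.le
  have hexp_add : (p - 2) / p + 2 / p = 1 := by field_simp; ring
  have hlin_int := (integrable_abs_rpow_sub_two_mul_mul (by linarith) hf hg).const_mul p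
  have hsq_int : Integrable (fun x => |f x| ^ (p - 2) * g x ^ 2) μ := by
    simpa only [abs_rpow_sub_two_mul_sq hp0] using
      integrable_rpow_mul_rpow hf_int hg_int hf_nonneg hg_nonneg hexp (by positivity) hexp_add
  have hmain_int : Integrable (fun x => |f x| ^ p + p * (|f x| ^ (p - 2) * f x * g x)) μ :=
    hf_int.add hlin_int
  have hrest_int : Integrable
      (fun x => rpowTaylorConst p * (|f x| ^ (p - 2) * g x ^ 2 + |g x| ^ p)) μ :=
    (hsq_int.add hg_int).const_mul _
  have hsq_le : ∫ x, |f x| ^ (p - 2) * g x ^ 2 ∂μ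
      ≤ (∫ x, |f x| ^ p ∂μ) ^ ((p - 2) / p) * (∫ x, |g x| ^ p ∂μ) ^ (2 / p) := by
    simpa only [abs_rpow_sub_two_mul_sq hp0] using
      integral_rpow_mul_rpow_le hf_int hg_int hf_nonneg hg_nonneg hexp (by positivity) hexp_add
  calc ∫ x, |f x + g x| ^ p ∂μ
      ≤ ∫ x, (|f x| ^ p + p * (|f x| ^ (p - 2) * f x * g x)
          + rpowTaylorConst p * (|f x| ^ (p - 2) * g x ^ 2 + |g x| ^ p)) ∂μ :=
        integral_mono (integrable_abs_rpow_of_memLp hp0 (hf.add hg)) (hmain_int.add hrest_int)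
          fun x => abs_add_rpow_le (by linarith) (f x) (g x)
    _ = ∫ x, |f x| ^ p ∂μ + rpowTaylorConst p *
          (∫ x, |f x| ^ (p - 2) * g x ^ 2 ∂μ + ∫ x, |g x| ^ p ∂μ) := by
        rw [integral_add hmain_int hrest_int, integral_add hf_int hlin_int, integral_const_mul, hfg,
          integral_const_mul, integral_add hsq_int hg_int, mul_zero, add_zero]
    _ ≤ _ := by
        gcongr
        exact rpowTaylorConst_nonneg hp0.le

/-- The constant in the moment inequality `integral_abs_sum_rpow_le`. -/
def momentConst (p : ℝ) : ℝ := (2 * rpowTaylorConst p + 1) ^ (p / 2)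

lemma momentConst_nonneg (hp : 0 ≤ p) : 0 ≤ momentConst p := by
  have := rpowTaylorConst_nonneg hp
  unfold momentConst
  positivity

theorem integral_abs_sum_rpow_le {ι : Type*} {X : ι → α → ℝ} {b : ℝ} (hp : 2 ≤ p)
    (hX : ∀ k, MemLp (X k) (ENNReal.ofReal p) μ) (hb : ∀ k, ∫ x, |X k x| ^ p ∂μ ≤ b)
    (horth : ∀ (T : Finset ι) (k : ι), k ∉ T → LpOrthogonal p μ (fun x => ∑ j ∈ T, X j x) (X k))
    (S : Finset ι) :
    ∫ x, |∑ k ∈ S, X k x| ^ p ∂μ ≤ momentConst p * (#S : ℝ) ^ (p / 2) * b := by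
  classical
  have hp0 : 0 < p := by linarith
  have hC := rpowTaylorConst_nonneg hp0.le
  rw [momentConst, ← Real.mul_rpow (by positivity) (by positivity)]
  induction S using Finset.induction_on with
  | empty => simp [Real.zero_rpow hp0.ne', Real.zero_rpow (show p / 2 ≠ 0 by positivity)]
  | insert k S hk ih =>
    have hb0 : 0 ≤ b := (integral_nonneg fun x => by positivity).trans (hb k)
    set C := rpowTaylorConst p
    set y := (2 * C + 1) * (#S : ℝ) with hy
    have hy0 : 0 ≤ y := by positivity
    have hcross : (y ^ (p / 2) * b) ^ ((p - 2) / p) * b ^ (2 / p) = y ^ (p / 2 - 1) * b := by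
      rw [mul_rpow_mul_rpow_of_add_eq_one (by positivity) hb0 (by field_simp; ring),
        ← Real.rpow_mul hy0]
      congr 2
      field_simp
    simp_rw [Finset.sum_insert hk, add_comm (X k _)]
    calc ∫ x, |∑ j ∈ S, X j x + X k x| ^ p ∂μ
        ≤ ∫ x, |∑ j ∈ S, X j x| ^ p ∂μ + C *
          ((∫ x, |∑ j ∈ S, X j x| ^ p ∂μ) ^ ((p - 2) / p) * (∫ x, |X k x| ^ p ∂μ) ^ (2 / p)
            + ∫ x, |X k x| ^ p ∂μ) :=
          integral_abs_add_rpow_le hp (memLp_finsetSum S fun j _ => hX j) (hX k) (horth S k hk)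
      _ ≤ y ^ (p / 2) * b + C * ((y ^ (p / 2) * b) ^ ((p - 2) / p) * b ^ (2 / p) + b) := by
          have := div_nonneg (sub_nonneg.2 hp) hp0.le
          have : 0 ≤ ∫ x, |∑ j ∈ S, X j x| ^ p ∂μ := integral_nonneg fun x => by positivity
          have : 0 ≤ ∫ x, |X k x| ^ p ∂μ := integral_nonneg fun x => by positivity
          gcongr <;> exact hb k
      _ = (y ^ (p / 2) + C * (y ^ (p / 2 - 1) + 1)) * b := by
          rw [hcross]
          ring
      _ ≤ (y + (2 * C + 1)) ^ (p / 2) * b := by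
          gcongr
          exact rpow_add_mul_le_add_rpow hy0 hC (by linarith)
      _ = ((2 * C + 1) * (#(insert k S) : ℝ)) ^ (p / 2) * b := by
          rw [Finset.card_insert_of_notMem hk, hy]
          push_cast
          ring_nf

end LpMoments

/-- The remainder `x - 1 - log x` of the first-order expansion of `-log` at `1`. -/
def logRemainder (x : ℝ) : ℝ := x - 1 - Real.log x

lemma log_eq_sub_logRemainder (x : ℝ) : Real.log x = x - 1 - logRemainder x := by
  simp [logRemainder]

@[fun_prop]
lemma measurable_logRemainder : Measurable logRemainder :=
  (measurable_id.sub_const 1).sub Real.measurable_log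

lemma logRemainder_nonneg {x : ℝ} (hx : 0 < x) : 0 ≤ logRemainder x :=
  sub_nonneg.mpr (Real.log_le_sub_one_of_pos hx)

lemma logRemainder_le_sq_div {x : ℝ} (hx : 0 < x) : logRemainder x ≤ (x - 1) ^ 2 / x :=
  calc logRemainder x ≤ x - 1 - (1 - x⁻¹) := by
        unfold logRemainder
        linarith [Real.one_sub_inv_le_log_of_pos hx]
    _ = (x - 1) ^ 2 / x := by field_simp

lemma sq_le_abs_rpow {u r : ℝ} (hu : |u| ≤ 1) (hr1 : 1 ≤ r) (hr2 : r ≤ 2) : u ^ 2 ≤ |u| ^ r := by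
  rw [← sq_abs, ← Real.rpow_two]
  exact Real.rpow_le_rpow_of_exponent_ge' (abs_nonneg u) hu (by linarith) hr2

lemma logRemainder_le {x r a : ℝ} (hx : 0 < x) (hr1 : 1 ≤ r) (hr2 : r ≤ 2) (ha : 0 ≤ a)
    (hxa : -Real.log x ≤ a) : logRemainder x ≤ 4 * (|x - 1| ^ r * (1 + a)) := by
  have hpow : 0 ≤ |x - 1| ^ r := by positivity
  have hmul : 0 ≤ |x - 1| ^ r * a := mul_nonneg hpow ha
  rcases le_total 2 x with h2 | h2
  · have hself : |x - 1| ≤ |x - 1| ^ r :=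
      Real.self_le_rpow_of_one_le (by rw [abs_of_nonneg] <;> linarith) hr1
    unfold logRemainder
    linarith [Real.log_nonneg (show 1 ≤ x by linarith), le_abs_self (x - 1)]
  have hsq : (x - 1) ^ 2 ≤ |x - 1| ^ r := by
    refine sq_le_abs_rpow (abs_le.mpr ⟨?_, ?_⟩) hr1 hr2 <;> linarith
  rcases le_total (1 / 2) x with h1 | h1
  · have : (x - 1) ^ 2 / x ≤ 2 * (x - 1) ^ 2 := by
      rw [div_le_iff₀ hx]
      nlinarith [sq_nonneg (x - 1)]
    linarith [logRemainder_le_sq_div hx]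
  · have hquarter : 1 / 4 ≤ |x - 1| ^ r := by nlinarith
    unfold logRemainder
    nlinarith

section SampleMean

variable {ι : Type*} {S : Finset ι} {v : ι → ℝ}

lemma neg_log_expect_le (hS : S.Nonempty) (hv : ∀ k, 0 < v k) :
    -Real.log (𝔼 k ∈ S, v k) ≤ 𝔼 k ∈ S, |Real.log (v k)| := by
  have hn : (#S : ℝ) ≠ 0 := by exact_mod_cast hS.card_ne_zero
  have hconcave : 𝔼 k ∈ S, Real.log (v k) ≤ Real.log (𝔼 k ∈ S, v k) := by
    have := strictConcaveOn_log_Ioi.concaveOn.le_map_sum (t := S) (w := fun _ => (#S : ℝ)⁻¹)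
      (p := v) (fun _ _ => by positivity) (by simp [hn]) fun k _ => hv k
    simpa only [smul_eq_mul, inv_mul_eq_div, Finset.expect_eq_sum_div_card, Finset.sum_div]
      using this
  calc -Real.log (𝔼 k ∈ S, v k) ≤ -𝔼 k ∈ S, Real.log (v k) := neg_le_neg hconcave
    _ = 𝔼 k ∈ S, -Real.log (v k) := (Finset.expect_neg_distrib S _).symm
    _ ≤ 𝔼 k ∈ S, |Real.log (v k)| := Finset.expect_le_expect fun k _ => neg_le_abs _

lemma expect_rpow_le (hS : S.Nonempty) (hv : ∀ k, 0 ≤ v k) {t : ℝ} (ht : 1 ≤ t) :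
    (𝔼 k ∈ S, v k) ^ t ≤ 𝔼 k ∈ S, v k ^ t := by
  have hn : (#S : ℝ) ≠ 0 := by exact_mod_cast hS.card_ne_zero
  have := Real.rpow_arith_mean_le_arith_mean_rpow S (fun _ => (#S : ℝ)⁻¹) v
    (fun _ _ => by positivity) (by simp [hn]) (fun k _ => hv k) ht
  simpa only [inv_mul_eq_div, Finset.expect_eq_sum_div_card, Finset.sum_div] using this

lemma abs_expect_sub_one (hS : S.Nonempty) :
    |𝔼 k ∈ S, v k - 1| = (#S : ℝ)⁻¹ * |∑ k ∈ S, (v k - 1)| := by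
  rw [← Finset.expect_const hS (1 : ℝ), ← Finset.expect_sub_distrib,
    Finset.expect_eq_sum_div_card, abs_div, Nat.abs_cast, inv_mul_eq_div]
  simp only [Finset.expect_const hS]

lemma logRemainder_expect_rpow_le (hS : S.Nonempty) (hv : ∀ k, 0 < v k) {r κ m t : ℝ}
    (hr1 : 1 ≤ r) (hr2 : r ≤ 2) (hκ : 0 ≤ κ) (hm : 0 < m) (ht : 1 ≤ t)
    (hexp : κ * r / m + κ / t = 1) :
    logRemainder (𝔼 k ∈ S, v k) ^ κ ≤ 4 ^ κ * (#S : ℝ) ^ (-(κ * r / 2)) *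
      ((#S : ℝ) ^ (-(m / 2)) * |∑ k ∈ S, (v k - 1)| ^ m
        + 𝔼 k ∈ S, (1 + |Real.log (v k)|) ^ t) := by
  have hn : (0 : ℝ) < #S := by exact_mod_cast hS.card_pos
  have hmean : 0 < 𝔼 k ∈ S, v k := Finset.expect_pos (fun k _ => hv k) hS
  have ha : 0 ≤ 𝔼 k ∈ S, |Real.log (v k)| := Finset.expect_nonneg fun k _ => abs_nonneg _
  have hjensen : (1 + 𝔼 k ∈ S, |Real.log (v k)|) ^ t ≤ 𝔼 k ∈ S, (1 + |Real.log (v k)|) ^ t := by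
    rw [← Finset.expect_const hS (1 : ℝ), ← Finset.expect_add_distrib]
    simpa only [Finset.expect_const hS] using
      expect_rpow_le hS (fun k => by positivity : ∀ k, 0 ≤ 1 + |Real.log (v k)|) ht
  set d := |∑ k ∈ S, (v k - 1)|
  set a := 𝔼 k ∈ S, |Real.log (v k)|
  have hd : 0 ≤ d := abs_nonneg _
  have hyoung : (#S : ℝ) ^ (-(κ * r / 2)) * d ^ (κ * r) * (1 + a) ^ κ
      ≤ (#S : ℝ) ^ (-(m / 2)) * d ^ m + (1 + a) ^ t := by
    have hscale : ∀ c : ℝ, (#S : ℝ) ^ (-(c / 2)) * d ^ c = ((#S : ℝ) ^ (-(1 / 2) : ℝ) * d) ^ c :=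
      fun c => by
        rw [Real.mul_rpow (by positivity) hd, ← Real.rpow_mul hn.le]
        ring_nf
    rw [hscale, hscale]
    exact rpow_mul_rpow_le_rpow_add_rpow (by positivity) (by positivity) (by positivity) hκ hm
      (by linarith) hexp
  calc logRemainder (𝔼 k ∈ S, v k) ^ κ
      ≤ (4 * (((#S : ℝ)⁻¹ * d) ^ r * (1 + a))) ^ κ := by
        rw [← abs_expect_sub_one hS]
        exact Real.rpow_le_rpow (logRemainder_nonneg hmean)
          (logRemainder_le hmean hr1 hr2 ha (neg_log_expect_le hS hv)) hκ
    _ = 4 ^ κ * (#S : ℝ) ^ (-(κ * r / 2))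
          * ((#S : ℝ) ^ (-(κ * r / 2)) * d ^ (κ * r) * (1 + a) ^ κ) := by
        rw [Real.mul_rpow (by positivity) (by positivity),
          Real.mul_rpow (by positivity) (by positivity), ← Real.rpow_mul (by positivity),
          Real.mul_rpow (by positivity) hd, Real.inv_rpow hn.le, ← Real.rpow_neg hn.le,
          show -(r * κ) = -(κ * r / 2) + -(κ * r / 2) by ring, Real.rpow_add hn, mul_comm r κ]
        ring
    _ ≤ _ := by
        gcongr
        exact hyoung.trans (by gcongr)

end SampleMean

section LogRemainderMoments

variable {ι Ω : Type*} [MeasurableSpace Ω] {P : Measure Ω} {W : ι → Ω → ℝ} {S : Finset ι}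

lemma memLp_expect {q : ℝ≥0∞} (hW : ∀ k, MemLp (W k) q P) (S : Finset ι) :
    MemLp (fun ω => 𝔼 k ∈ S, W k ω) q P := by
  simp only [Finset.expect_eq_sum_div_card, div_eq_inv_mul]
  exact (memLp_finsetSum S fun k _ => hW k).const_mul _

lemma integrable_expect (hW : ∀ k, Integrable (W k) P) (S : Finset ι) :
    Integrable (fun ω => 𝔼 k ∈ S, W k ω) P :=
  memLp_one_iff_integrable.mp (memLp_expect (fun k => memLp_one_iff_integrable.mpr (hW k)) S)

lemma integral_expect (hW : ∀ k, Integrable (W k) P) (S : Finset ι) :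
    ∫ ω, 𝔼 k ∈ S, W k ω ∂P = 𝔼 k ∈ S, ∫ ω, W k ω ∂P := by
  simp only [Finset.expect_eq_sum_div_card, integral_div, integral_finsetSum S fun k _ => hW k]

theorem integral_logRemainder_expect_rpow_le {r κ m t a b : ℝ} (hS : S.Nonempty)
    (hr1 : 1 ≤ r) (hr2 : r ≤ 2) (hκ : 0 ≤ κ) (hm : 2 ≤ m) (ht : 1 ≤ t)
    (hexp : κ * r / m + κ / t = 1) (hW : ∀ k ω, 0 < W k ω)
    (hWm : ∀ k, MemLp (fun ω => W k ω - 1) (ENNReal.ofReal m) P)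
    (hWa : ∀ k, ∫ ω, |W k ω - 1| ^ m ∂P ≤ a)
    (horth : ∀ (T : Finset ι) (k : ι), k ∉ T →
      LpOrthogonal m P (fun ω => ∑ j ∈ T, (W j ω - 1)) (fun ω => W k ω - 1))
    (hlog : ∀ k, Integrable (fun ω => (1 + |Real.log (W k ω)|) ^ t) P)
    (hlogb : ∀ k, ∫ ω, (1 + |Real.log (W k ω)|) ^ t ∂P ≤ b) :
    ∫ ω, logRemainder (𝔼 k ∈ S, W k ω) ^ κ ∂P
      ≤ 4 ^ κ * (momentConst m * a + b) * (#S : ℝ) ^ (-(κ * r / 2)) := by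
  have hm0 : 0 < m := by linarith
  have hn : (0 : ℝ) < #S := by exact_mod_cast hS.card_pos
  have hsum_int : Integrable
      (fun ω => (#S : ℝ) ^ (-(m / 2)) * |∑ k ∈ S, (W k ω - 1)| ^ m) P :=
    (integrable_abs_rpow_of_memLp hm0 (memLp_finsetSum S fun k _ => hWm k)).const_mul _
  have hsum_le : ∫ ω, (#S : ℝ) ^ (-(m / 2)) * |∑ k ∈ S, (W k ω - 1)| ^ m ∂P
      ≤ momentConst m * a := by
    rw [integral_const_mul]
    calc _ ≤ (#S : ℝ) ^ (-(m / 2)) * (momentConst m * (#S : ℝ) ^ (m / 2) * a) := by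
          gcongr
          exact integral_abs_sum_rpow_le hm hWm hWa horth S
      _ = ((#S : ℝ) ^ (-(m / 2)) * (#S : ℝ) ^ (m / 2)) * (momentConst m * a) := by ring
      _ = momentConst m * a := by rw [← Real.rpow_add hn, neg_add_cancel, Real.rpow_zero, one_mul]
  have hmean_int := integrable_expect hlog S
  have hmean_le : ∫ ω, 𝔼 k ∈ S, (1 + |Real.log (W k ω)|) ^ t ∂P ≤ b :=
    (integral_expect hlog S).trans_le (Finset.expect_le hS fun k _ => hlogb k)
  calc ∫ ω, logRemainder (𝔼 k ∈ S, W k ω) ^ κ ∂P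
      ≤ ∫ ω, 4 ^ κ * (#S : ℝ) ^ (-(κ * r / 2)) *
          ((#S : ℝ) ^ (-(m / 2)) * |∑ k ∈ S, (W k ω - 1)| ^ m
            + 𝔼 k ∈ S, (1 + |Real.log (W k ω)|) ^ t) ∂P :=
        integral_mono_of_nonneg
          (ae_of_all _ fun ω => Real.rpow_nonneg
            (logRemainder_nonneg (Finset.expect_pos (fun k _ => hW k ω) hS)) κ)
          ((hsum_int.add hmean_int).const_mul _)
          (ae_of_all _ fun ω =>
            logRemainder_expect_rpow_le hS (fun k => hW k ω) hr1 hr2 hκ hm0 ht hexp)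
    _ ≤ 4 ^ κ * (#S : ℝ) ^ (-(κ * r / 2)) * (momentConst m * a + b) := by
        rw [integral_const_mul, integral_add hsum_int hmean_int]
        gcongr
    _ = _ := by ring

lemma memLp_logRemainder_expect {q : ℝ≥0∞} (hS : S.Nonempty) (hW : ∀ k ω, 0 < W k ω)
    (hWq : ∀ k, MemLp (W k) q P) (hlog : ∀ k, MemLp (fun ω => Real.log (W k ω)) q P) :
    MemLp (fun ω => logRemainder (𝔼 k ∈ S, W k ω)) q P := by
  have hmean := memLp_expect hWq S
  refine (hmean.add (memLp_expect (fun k => (hlog k).norm) S)).mono'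
    (measurable_logRemainder.comp_aemeasurable hmean.aemeasurable).aestronglyMeasurable
    (ae_of_all _ fun ω => ?_)
  rw [Real.norm_of_nonneg
    (logRemainder_nonneg (Finset.expect_pos (fun k _ => hW k ω) hS))]
  have := neg_log_expect_le hS fun k => hW k ω
  simp only [logRemainder, Pi.add_apply, Real.norm_eq_abs]
  linarith

end LogRemainderMoments

section ConditionallyIID

variable {E 𝒵 : Type*} [MeasurableSpace E] [MeasurableSpace 𝒵]

/-- The kernel that, given `x`, draws a family of independent samples from `η x`, indexed by the
finite type `ι`. -/
def iidKernel (η : Kernel E 𝒵) [IsMarkovKernel η] (ι : Type*) [Fintype ι] :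
    Kernel E (ι → 𝒵) where
  toFun x := Measure.pi fun _ => η x
  measurable' := by
    refine Measurable.measure_of_isPiSystem_of_isProbabilityMeasure generateFrom_pi.symm
      isPiSystem_pi ?_
    rintro _ ⟨s, hs, rfl⟩
    simp only [Measure.pi_pi]
    exact Finset.measurable_fun_prod _ fun i _ => η.measurable_coe (hs i (Set.mem_univ i))

variable {ρ : Measure E} {η : Kernel E 𝒵} [IsMarkovKernel η] {ι : Type*} [Fintype ι]

lemma iidKernel_apply (x : E) : iidKernel η ι x = Measure.pi fun _ => η x := rfl

instance : IsMarkovKernel (iidKernel η ι) :=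
  ⟨fun x => by rw [iidKernel_apply]; infer_instance⟩

/-- The joint law of a parameter `x ~ ρ` and of samples `zs k`, `k : ι`, which given `x` are
independent with law `η x`. -/
abbrev iidLaw (ρ : Measure E) (η : Kernel E 𝒵) [IsMarkovKernel η] (ι : Type*) [Fintype ι] :
    Measure (E × (ι → 𝒵)) :=
  ρ ⊗ₘ iidKernel η ι

lemma iidKernel_map_eval (k : ι) : (iidKernel η ι).map (Function.eval k) = η := by
  ext1 x
  rw [Kernel.map_apply _ (measurable_pi_apply k), iidKernel_apply]
  exact (measurePreserving_eval (fun _ => η x) k).map_eq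

lemma measurePreserving_sample [SFinite ρ] (k : ι) :
    MeasurePreserving (fun ω : E × (ι → 𝒵) => (ω.1, ω.2 k)) (iidLaw ρ η ι) (ρ ⊗ₘ η) := by
  refine ⟨by fun_prop, ?_⟩
  conv_rhs => rw [← iidKernel_map_eval (η := η) k, Measure.compProd_map (measurable_pi_apply k)]
  rfl

lemma integral_comp_sample [SFinite ρ] {f : E × 𝒵 → ℝ} (hf : AEStronglyMeasurable f (ρ ⊗ₘ η))
    (k : ι) : ∫ ω, f (ω.1, ω.2 k) ∂iidLaw ρ η ι = ∫ p, f p ∂(ρ ⊗ₘ η) := by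
  have hmap := (measurePreserving_sample (ρ := ρ) (η := η) k).map_eq
  rw [← hmap, integral_map (by fun_prop) (hmap ▸ hf)]

lemma integral_comp_sum_mul_eq_zero {μ : Measure 𝒵} [IsProbabilityMeasure μ] {g : 𝒵 → ℝ}
    (hg : Measurable g) (hg0 : ∫ z, g z ∂μ = 0) {φ : ℝ → ℝ} (hφ : Measurable φ) {T : Finset ι}
    {k : ι} (hk : k ∉ T) :
    ∫ zs, φ (∑ j ∈ T, g (zs j)) * g (zs k) ∂(Measure.pi fun _ : ι => μ) = 0 := by
  have hindep : IndepFun (fun zs => φ (∑ j ∈ T, g (zs j))) (fun zs => g (zs k))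
      (Measure.pi fun _ : ι => μ) := by
    have hiindep := iIndepFun_pi (μ := fun _ : ι => μ) fun _ => hg.aemeasurable
    simpa [Function.comp_def] using
      (hiindep.indepFun_finsetSum_of_notMem (fun _ => by fun_prop) hk).comp hφ measurable_id
  have hmean : ∫ zs : ι → 𝒵, g (zs k) ∂(Measure.pi fun _ : ι => μ) = 0 :=
    (integral_comp_eval (μ := fun _ : ι => μ) hg.aestronglyMeasurable).trans hg0
  rw [hindep.integral_fun_mul_eq_mul_integral
    (by fun_prop : Measurable _).aestronglyMeasurable
    (by fun_prop : Measurable _).aestronglyMeasurable, hmean, mul_zero]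

lemma lpOrthogonal_sum_sample [SFinite ρ] {p : ℝ} (hp : 1 < p) {f : E × 𝒵 → ℝ}
    (hfm : Measurable f) (hf : MemLp f (ENNReal.ofReal p) (ρ ⊗ₘ η))
    (hmean : ∀ᵐ x ∂ρ, ∫ z, f (x, z) ∂η x = 0) {T : Finset ι} {k : ι} (hk : k ∉ T) :
    LpOrthogonal p (iidLaw ρ η ι) (fun ω => ∑ j ∈ T, f (ω.1, ω.2 j))
      (fun ω => f (ω.1, ω.2 k)) := by
  have hsample : ∀ j, MemLp (fun ω : E × (ι → 𝒵) => f (ω.1, ω.2 j)) (ENNReal.ofReal p)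
      (iidLaw ρ η ι) := fun j => hf.comp_measurePreserving (measurePreserving_sample j)
  rw [LpOrthogonal, Measure.integral_compProd
    (integrable_abs_rpow_sub_two_mul_mul hp (memLp_finsetSum T fun j _ => hsample j) (hsample k))]
  refine integral_eq_zero_of_ae (hmean.mono fun x hx => ?_)
  exact integral_comp_sum_mul_eq_zero (hfm.comp measurable_prodMk_left) hx
    (φ := fun y => |y| ^ (p - 2) * y) (by fun_prop) hk

lemma integrable_expect_sample [SFinite ρ] {S : Finset ι} {f : E × 𝒵 → ℝ}
    (hf : Integrable f (ρ ⊗ₘ η)) :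
    Integrable (fun ω => 𝔼 k ∈ S, f (ω.1, ω.2 k)) (iidLaw ρ η ι) :=
  integrable_expect (fun k => (measurePreserving_sample k).integrable_comp_of_integrable hf) S

end ConditionallyIID

section NormalizedWeight

variable {E 𝒵 : Type*} [MeasurableSpace E] [MeasurableSpace 𝒵]

/-- A normalized weight: a positive measurable function on `E × 𝒵` whose conditional mean given
the parameter is one. -/
structure IsNormalizedWeight (ρ : Measure E) (η : Kernel E 𝒵) (w : E × 𝒵 → ℝ) : Prop where
  measurable : Measurable w
  pos : ∀ p, 0 < w p
  integral_eq_one : ∀ᵐ x ∂ρ, ∫ z, w (x, z) ∂η x = 1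

variable {ρ : Measure E} {η : Kernel E 𝒵} [IsMarkovKernel η] {ι : Type*} [Fintype ι]
  {S : Finset ι} {w : E × 𝒵 → ℝ}

lemma IsNormalizedWeight.integral_sub_one (hw : IsNormalizedWeight ρ η w) :
    ∀ᵐ x ∂ρ, ∫ z, (w (x, z) - 1) ∂η x = 0 := by
  filter_upwards [hw.integral_eq_one] with x hx
  have hint : Integrable (fun z => w (x, z)) (η x) := by
    by_contra h
    simp [integral_undef h] at hx
  simp [integral_sub hint (integrable_const _), hx]

variable [IsProbabilityMeasure ρ]

lemma IsNormalizedWeight.integral_compProd_eq_one (hw : IsNormalizedWeight ρ η w)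
    (hint : Integrable w (ρ ⊗ₘ η)) : ∫ p, w p ∂(ρ ⊗ₘ η) = 1 := by
  rw [Measure.integral_compProd hint, integral_congr_ae hw.integral_eq_one]
  simp

theorem IsNormalizedWeight.integral_logRemainder_rpow_le (hw : IsNormalizedWeight ρ η w)
    {r κ m t : ℝ} (hS : S.Nonempty) (hr1 : 1 ≤ r) (hr2 : r ≤ 2) (hκ : 0 ≤ κ) (hm : 2 ≤ m)
    (ht : 1 ≤ t) (hexp : κ * r / m + κ / t = 1) (hwm : MemLp w (ENNReal.ofReal m) (ρ ⊗ₘ η))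
    (hwt : MemLp (fun p => Real.log (w p)) (ENNReal.ofReal t) (ρ ⊗ₘ η)) :
    ∫ ω, logRemainder (𝔼 k ∈ S, w (ω.1, ω.2 k)) ^ κ ∂iidLaw ρ η ι
      ≤ 4 ^ κ * (momentConst m * ∫ p, |w p - 1| ^ m ∂(ρ ⊗ₘ η)
          + ∫ p, (1 + |Real.log (w p)|) ^ t ∂(ρ ⊗ₘ η)) * (#S : ℝ) ^ (-(κ * r / 2)) := by
  have hmeas := hw.measurable
  have hcentred : MemLp (fun p => w p - 1) (ENNReal.ofReal m) (ρ ⊗ₘ η) := hwm.sub (memLp_const 1)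
  have hlog : Integrable (fun p => (1 + |Real.log (w p)|) ^ t) (ρ ⊗ₘ η) := by
    refine (integrable_abs_rpow_of_memLp (by linarith) ((memLp_const (1 : ℝ)).add hwt.abs)).congr
      (ae_of_all _ fun p => ?_)
    simp [abs_of_nonneg (add_nonneg zero_le_one (abs_nonneg (Real.log (w p))))]
  refine integral_logRemainder_expect_rpow_le hS hr1 hr2 hκ hm ht hexp (fun k ω => hw.pos _)
    (fun k => hcentred.comp_measurePreserving (measurePreserving_sample k))
    (fun k => (integral_comp_sample (f := fun p => |w p - 1| ^ m) ?_ k).le)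
    (fun T k hk => lpOrthogonal_sum_sample (by linarith) (hmeas.sub_const 1) hcentred
      hw.integral_sub_one hk)
    (fun k => (measurePreserving_sample k).integrable_comp_of_integrable hlog)
    (fun k => (integral_comp_sample hlog.aestronglyMeasurable k).le)
  exact (by fun_prop : Measurable fun p => |w p - 1| ^ m).aestronglyMeasurable

theorem IsNormalizedWeight.exists_integral_logRemainder_rpow_le (hw : IsNormalizedWeight ρ η w)
    {κ s t : ℝ} (hκ : 1 ≤ κ) (hκt : κ < t) (hs : 2 ≤ s) (hst : κ * t ≤ s * (t - κ))
    (hws : MemLp w (ENNReal.ofReal s) (ρ ⊗ₘ η))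
    (hwt : MemLp (fun p => Real.log (w p)) (ENNReal.ofReal t) (ρ ⊗ₘ η)) :
    ∃ C : ℝ, 0 ≤ C ∧ ∀ (n : ℕ) (S : Finset (Fin n)), S.Nonempty →
      ∫ ω, logRemainder (𝔼 k ∈ S, w (ω.1, ω.2 k)) ^ κ ∂iidLaw ρ η (Fin n)
        ≤ C * (#S : ℝ) ^ (-(min (s * (t - κ) / (2 * t)) κ)) := by
  have hκ0 : 0 < κ := by linarith
  have ht0 : 0 < t := by linarith
  have htκ : 0 < t - κ := by linarith
  -- `m` is dictated by `hexp` below; `r` is the largest exponent in `[1, 2]` for which `m ≤ s`.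
  set r := min (s * (t - κ) / (κ * t)) 2 with hr
  set m := κ * r * t / (t - κ) with hm
  have hr1 : 1 ≤ r := le_min ((one_le_div (by positivity)).mpr hst) one_le_two
  have hr2 : r ≤ 2 := min_le_right _ _
  have hms : m ≤ s := by
    rw [hm, div_le_iff₀ htκ, mul_right_comm, mul_comm, ← le_div_iff₀ (by positivity)]
    exact min_le_left _ _
  have hm2 : 2 ≤ m := by
    rw [hm, le_div_iff₀ htκ, mul_right_comm, hr, mul_min_of_nonneg _ _ (by positivity),
      mul_div_cancel₀ _ (by positivity), le_min_iff]
    constructor <;> nlinarith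
  have hexp : κ * r / m + κ / t = 1 := by
    rw [hm]
    field_simp
    ring
  have hrate : κ * r / 2 = min (s * (t - κ) / (2 * t)) κ := by
    rw [hr, mul_min_of_nonneg _ _ hκ0.le, ← min_div_div_right (by norm_num)]
    congr 1 <;> field_simp
  have hwm : MemLp w (ENNReal.ofReal m) (ρ ⊗ₘ η) := hws.mono_exponent (ENNReal.ofReal_le_ofReal hms)
  refine ⟨4 ^ κ * (momentConst m * ∫ p, |w p - 1| ^ m ∂(ρ ⊗ₘ η)
    + ∫ p, (1 + |Real.log (w p)|) ^ t ∂(ρ ⊗ₘ η)), ?_, fun n S hS => ?_⟩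
  · have := momentConst_nonneg (show 0 ≤ m by linarith)
    have : 0 ≤ ∫ p, |w p - 1| ^ m ∂(ρ ⊗ₘ η) := integral_nonneg fun p => by positivity
    have : 0 ≤ ∫ p, (1 + |Real.log (w p)|) ^ t ∂(ρ ⊗ₘ η) := integral_nonneg fun p => by positivity
    positivity
  · rw [← hrate]
    exact hw.integral_logRemainder_rpow_le hS hr1 hr2 hκ0.le hm2 (by linarith) hexp hwm hwt

lemma IsNormalizedWeight.memLp_logRemainder {q : ℝ≥0∞} (hw : IsNormalizedWeight ρ η w)
    (hS : S.Nonempty) (hwq : MemLp w q (ρ ⊗ₘ η))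
    (hlog : MemLp (fun p => Real.log (w p)) q (ρ ⊗ₘ η)) :
    MemLp (fun ω => logRemainder (𝔼 k ∈ S, w (ω.1, ω.2 k))) q (iidLaw ρ η ι) :=
  memLp_logRemainder_expect hS (fun _ _ => hw.pos _)
    (fun k => hwq.comp_measurePreserving (measurePreserving_sample k))
    (fun k => hlog.comp_measurePreserving (measurePreserving_sample k))

lemma IsNormalizedWeight.integral_expect_eq_one (hw : IsNormalizedWeight ρ η w) (hS : S.Nonempty)
    (hint : Integrable w (ρ ⊗ₘ η)) :
    ∫ ω, 𝔼 k ∈ S, w (ω.1, ω.2 k) ∂iidLaw ρ η ι = 1 := by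
  have hsample : ∀ k, Integrable (fun ω : E × (ι → 𝒵) => w (ω.1, ω.2 k)) (iidLaw ρ η ι) :=
    fun k => (measurePreserving_sample k).integrable_comp_of_integrable hint
  rw [integral_expect hsample]
  simp only [integral_comp_sample hint.aestronglyMeasurable, hw.integral_compProd_eq_one hint,
    Finset.expect_const hS]

lemma IsNormalizedWeight.integrable_logRemainder (hw : IsNormalizedWeight ρ η w)
    (hS : S.Nonempty) (hint : Integrable w (ρ ⊗ₘ η))
    (hlog : Integrable (fun p => Real.log (w p)) (ρ ⊗ₘ η)) :
    Integrable (fun ω => logRemainder (𝔼 k ∈ S, w (ω.1, ω.2 k))) (iidLaw ρ η ι) :=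
  memLp_one_iff_integrable.mp
    (hw.memLp_logRemainder hS (memLp_one_iff_integrable.mpr hint)
      (memLp_one_iff_integrable.mpr hlog))

lemma IsNormalizedWeight.integrable_log_expect (hw : IsNormalizedWeight ρ η w) (hS : S.Nonempty)
    (hint : Integrable w (ρ ⊗ₘ η)) (hlog : Integrable (fun p => Real.log (w p)) (ρ ⊗ₘ η)) :
    Integrable (fun ω => Real.log (𝔼 k ∈ S, w (ω.1, ω.2 k))) (iidLaw ρ η ι) := by
  simp only [log_eq_sub_logRemainder]
  exact ((integrable_expect_sample hint).sub (integrable_const 1)).sub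
    (hw.integrable_logRemainder hS hint hlog)

lemma IsNormalizedWeight.integral_log_expect (hw : IsNormalizedWeight ρ η w) (hS : S.Nonempty)
    (hint : Integrable w (ρ ⊗ₘ η)) (hlog : Integrable (fun p => Real.log (w p)) (ρ ⊗ₘ η)) :
    ∫ ω, Real.log (𝔼 k ∈ S, w (ω.1, ω.2 k)) ∂iidLaw ρ η ι
      = -∫ ω, logRemainder (𝔼 k ∈ S, w (ω.1, ω.2 k)) ∂iidLaw ρ η ι := by
  have hmean := integrable_expect_sample (ι := ι) (S := S) hint
  have hcentred : Integrable (fun ω => 𝔼 k ∈ S, w (ω.1, ω.2 k) - 1) (iidLaw ρ η ι) :=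
    hmean.sub (integrable_const 1)
  simp only [log_eq_sub_logRemainder]
  rw [integral_sub hcentred (hw.integrable_logRemainder hS hint hlog),
    integral_sub hmean (integrable_const 1), hw.integral_expect_eq_one hS hint]
  simp

theorem IsNormalizedWeight.exists_abs_integral_log_expect_le (hw : IsNormalizedWeight ρ η w)
    {s t : ℝ} (hs : 2 ≤ s) (ht : 1 < t) (hst : t ≤ s * (t - 1))
    (hws : MemLp w (ENNReal.ofReal s) (ρ ⊗ₘ η))
    (hwt : MemLp (fun p => Real.log (w p)) (ENNReal.ofReal t) (ρ ⊗ₘ η)) :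
    ∃ C : ℝ, 0 ≤ C ∧ ∀ n : ℕ, 0 < n →
      |∫ ω, Real.log (𝔼 k, w (ω.1, ω.2 k)) ∂iidLaw ρ η (Fin n)|
        ≤ C * (n : ℝ) ^ (-(min (s * (t - 1) / (2 * t)) 1)) := by
  obtain ⟨C, hC, hR⟩ :=
    hw.exists_integral_logRemainder_rpow_le le_rfl ht hs (by rwa [one_mul]) hws hwt
  refine ⟨C, hC, fun n hn => ?_⟩
  have : NeZero n := ⟨hn.ne'⟩
  have hint := hws.integrable (ENNReal.one_le_ofReal.mpr (by linarith))
  have hlog := hwt.integrable (ENNReal.one_le_ofReal.mpr ht.le)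
  rw [hw.integral_log_expect univ_nonempty hint hlog, abs_neg, abs_of_nonneg
    (integral_nonneg fun ω => logRemainder_nonneg
      (Finset.expect_pos (fun k _ => hw.pos _) univ_nonempty))]
  simpa using hR n univ univ_nonempty

end NormalizedWeight

section AntitheticCoupling

variable {n : ℕ}

/-- The inclusion of the indices of the first `n` of `2 * n` samples. -/
def firstHalf (n : ℕ) : Fin n ↪ Fin (2 * n) :=
  ⟨fun k => ⟨k.1, by omega⟩, fun a b h => by simpa [Fin.ext_iff] using h⟩

/-- The inclusion of the indices of the last `n` of `2 * n` samples. -/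
def secondHalf (n : ℕ) : Fin n ↪ Fin (2 * n) :=
  ⟨fun k => ⟨n + k.1, by omega⟩, fun a b h => by simpa [Fin.ext_iff] using h⟩

lemma sum_eq_sum_firstHalf_add_sum_secondHalf (v : Fin (2 * n) → ℝ) :
    ∑ k, v k = ∑ k, v (firstHalf n k) + ∑ k, v (secondHalf n k) := by
  rw [← Equiv.sum_comp (finCongr (two_mul n).symm), Fin.sum_univ_add]
  rfl

lemma expect_eq_expect_halves (v : Fin (2 * n) → ℝ) :
    𝔼 k, v k = (𝔼 k ∈ univ.map (firstHalf n), v k + 𝔼 k ∈ univ.map (secondHalf n), v k) / 2 := by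
  simp only [Finset.expect_eq_sum_div_card, Finset.sum_map, Finset.card_map, Finset.card_univ,
    Fintype.card_fin, sum_eq_sum_firstHalf_add_sum_secondHalf v]
  push_cast
  ring

variable {Θ 𝒳 𝒵 : Type*} {w : Θ → 𝒳 → 𝒵 → ℝ}

lemma mlmcCorrection3_eq_log_expect (θ : Θ) (x : 𝒳) (zs : Fin (2 * n) → 𝒵) :
    mlmcCorrection3 w n θ x zs = Real.log (𝔼 k, w θ x (zs k))
      - (Real.log (𝔼 k ∈ univ.map (firstHalf n), w θ x (zs k))
        + Real.log (𝔼 k ∈ univ.map (secondHalf n), w θ x (zs k))) / 2 := by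
  simp only [mlmcCorrection3, Finset.expect_eq_sum_div_card, Finset.sum_map, Finset.card_map,
    Finset.card_univ, Fintype.card_fin, Nat.cast_mul, Nat.cast_ofNat]
  rfl

lemma mlmcCorrection3_eq_logRemainder (θ : Θ) (x : 𝒳) (zs : Fin (2 * n) → 𝒵) :
    mlmcCorrection3 w n θ x zs =
      (logRemainder (𝔼 k ∈ univ.map (firstHalf n), w θ x (zs k))
        + logRemainder (𝔼 k ∈ univ.map (secondHalf n), w θ x (zs k))) / 2
      - logRemainder (𝔼 k, w θ x (zs k)) := by
  rw [mlmcCorrection3_eq_log_expect]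
  simp only [logRemainder]
  linarith [expect_eq_expect_halves fun k => w θ x (zs k)]

lemma sq_half_add_sub_le (a b c : ℝ) : ((a + b) / 2 - c) ^ 2 ≤ a ^ 2 + b ^ 2 + 2 * c ^ 2 := by
  nlinarith [sq_nonneg ((a + b) / 2 + c), sq_nonneg (a - b)]

variable [MeasurableSpace Θ] [MeasurableSpace 𝒳] [MeasurableSpace 𝒵] {ρ : Measure (Θ × 𝒳)}
  [IsProbabilityMeasure ρ] {η : Kernel (Θ × 𝒳) 𝒵} [IsMarkovKernel η]

lemma memLp_mlmcCorrection3 {q : ℝ≥0∞} (hn : 0 < n)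
    (hw : IsNormalizedWeight ρ η (Function.uncurry (Function.uncurry w)))
    (hwq : MemLp (Function.uncurry (Function.uncurry w)) q (ρ ⊗ₘ η))
    (hlog : MemLp (fun p => Real.log (Function.uncurry (Function.uncurry w) p)) q (ρ ⊗ₘ η)) :
    MemLp (fun ω => mlmcCorrection3 w n ω.1.1 ω.1.2 ω.2) q (iidLaw ρ η (Fin (2 * n))) := by
  have : NeZero n := ⟨hn.ne'⟩
  have hR : ∀ S : Finset (Fin (2 * n)), S.Nonempty → _ :=
    fun S hS => hw.memLp_logRemainder hS hwq hlog
  simp only [mlmcCorrection3_eq_logRemainder, div_eq_inv_mul]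
  exact (((hR _ (univ_nonempty.map)).add (hR _ (univ_nonempty.map))).const_mul _).sub
    (hR _ univ_nonempty)

lemma integral_sq_mlmcCorrection3_le {C β : ℝ} (hn : 0 < n) (hC : 0 ≤ C) (hβ : 0 ≤ β)
    (hw : IsNormalizedWeight ρ η (Function.uncurry (Function.uncurry w)))
    (hw2 : MemLp (Function.uncurry (Function.uncurry w)) 2 (ρ ⊗ₘ η))
    (hlog2 : MemLp (fun p => Real.log (Function.uncurry (Function.uncurry w) p)) 2 (ρ ⊗ₘ η))
    (hR : ∀ S : Finset (Fin (2 * n)), S.Nonempty →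
      ∫ ω, logRemainder (𝔼 k ∈ S, w ω.1.1 ω.1.2 (ω.2 k)) ^ 2 ∂iidLaw ρ η (Fin (2 * n))
        ≤ C * (#S : ℝ) ^ (-β)) :
    ∫ ω, mlmcCorrection3 w n ω.1.1 ω.1.2 ω.2 ^ 2 ∂iidLaw ρ η (Fin (2 * n))
      ≤ 4 * C * (n : ℝ) ^ (-β) := by
  have : NeZero n := ⟨hn.ne'⟩
  set R : Finset (Fin (2 * n)) → (Θ × 𝒳) × (Fin (2 * n) → 𝒵) → ℝ :=
    fun S ω => logRemainder (𝔼 k ∈ S, w ω.1.1 ω.1.2 (ω.2 k))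
  have hRint : ∀ S, S.Nonempty →
      Integrable (fun ω => R S ω ^ 2) (iidLaw ρ η (Fin (2 * n))) :=
    fun S hS => (hw.memLp_logRemainder hS hw2 hlog2).integrable_sq
  have hRle : ∀ S, S.Nonempty → n ≤ #S →
      ∫ ω, R S ω ^ 2 ∂iidLaw ρ η (Fin (2 * n)) ≤ C * (n : ℝ) ^ (-β) := fun S hS hnS =>
    (hR S hS).trans <| mul_le_mul_of_nonneg_left (Real.rpow_le_rpow_of_nonpos
      (Nat.cast_pos.mpr hn) (Nat.cast_le.mpr hnS) (neg_nonpos.mpr hβ)) hC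
  set A := univ.map (firstHalf n)
  set B := univ.map (secondHalf n)
  have hA : A.Nonempty := univ_nonempty.map
  have hB : B.Nonempty := univ_nonempty.map
  have hAB : Integrable (fun ω => R A ω ^ 2 + R B ω ^ 2) (iidLaw ρ η (Fin (2 * n))) :=
    (hRint A hA).add (hRint B hB)
  have hU := (hRint univ univ_nonempty).const_mul 2
  calc ∫ ω, mlmcCorrection3 w n ω.1.1 ω.1.2 ω.2 ^ 2 ∂iidLaw ρ η (Fin (2 * n))
      ≤ ∫ ω, (R A ω ^ 2 + R B ω ^ 2 + 2 * R univ ω ^ 2) ∂iidLaw ρ η (Fin (2 * n)) := by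
        refine integral_mono_of_nonneg (ae_of_all _ fun ω => sq_nonneg _) (hAB.add hU)
          (ae_of_all _ fun ω => ?_)
        simp only [mlmcCorrection3_eq_logRemainder]
        exact sq_half_add_sub_le _ _ _
    _ = ∫ ω, R A ω ^ 2 ∂iidLaw ρ η (Fin (2 * n)) + ∫ ω, R B ω ^ 2 ∂iidLaw ρ η (Fin (2 * n))
        + 2 * ∫ ω, R univ ω ^ 2 ∂iidLaw ρ η (Fin (2 * n)) := by
        rw [← integral_const_mul, ← integral_add (hRint A hA) (hRint B hB), ← integral_add hAB hU]
    _ ≤ 4 * C * (n : ℝ) ^ (-β) := by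
        linarith [hRle A hA (by simp [A]), hRle B hB (by simp [B]),
          hRle univ univ_nonempty (by simp; omega)]

lemma two_le_ofReal {p : ℝ} (hp : 2 ≤ p) : 2 ≤ ENNReal.ofReal p := by
  simpa using ENNReal.ofReal_le_ofReal hp

theorem exists_integral_sq_mlmcCorrection3_le
    (hw : IsNormalizedWeight ρ η (Function.uncurry (Function.uncurry w))) {s t : ℝ} (hs : 2 ≤ s)
    (ht : 2 < t) (hst : 2 * t ≤ s * (t - 2))
    (hws : MemLp (Function.uncurry (Function.uncurry w)) (ENNReal.ofReal s) (ρ ⊗ₘ η))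
    (hwt : MemLp (fun p => Real.log (Function.uncurry (Function.uncurry w) p)) (ENNReal.ofReal t)
      (ρ ⊗ₘ η)) :
    ∃ C : ℝ, 0 ≤ C ∧ ∀ n : ℕ, 0 < n →
      ∫ ω, mlmcCorrection3 w n ω.1.1 ω.1.2 ω.2 ^ 2 ∂iidLaw ρ η (Fin (2 * n))
        ≤ C * (n : ℝ) ^ (-(min (s * (t - 2) / (2 * t)) 2)) := by
  obtain ⟨C, hC, hR⟩ := hw.exists_integral_logRemainder_rpow_le one_le_two ht hs hst hws hwt
  simp only [Real.rpow_two] at hR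
  have hβ : 0 ≤ min (s * (t - 2) / (2 * t)) 2 :=
    le_min (div_nonneg (by nlinarith) (by linarith)) zero_le_two
  exact ⟨4 * C, by positivity, fun n hn => integral_sq_mlmcCorrection3_le hn hC hβ hw
    (hws.mono_exponent (two_le_ofReal hs)) (hwt.mono_exponent (two_le_ofReal ht.le)) (hR (2 * n))⟩

end AntitheticCoupling

section JointExpectation

variable {Θ 𝒳 𝒵 : Type*} [MeasurableSpace Θ] [MeasurableSpace 𝒳] [MeasurableSpace 𝒵]
  {r : Measure Θ} {ν : Measure 𝒳} {q : Kernel 𝒳 𝒵} [IsMarkovKernel q] {n : ℕ}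
  {f : Θ → 𝒳 → (Fin n → 𝒵) → ℝ}

lemma memLp_of_lintegral_rpow_lt_top [SFinite r] [SFinite ν] {u : (Θ × 𝒳) × 𝒵 → ℝ}
    (hu : Measurable u) {p : ℝ} (hp : 0 < p)
    (h : ∫⁻ θ, ∫⁻ x, ∫⁻ z, ENNReal.ofReal (|u ((θ, x), z)| ^ p) ∂(q x) ∂ν ∂r < ⊤) :
    MemLp u (ENNReal.ofReal p) ((r.prod ν) ⊗ₘ Kernel.prodMkLeft Θ q) := by
  have hmeas : Measurable fun y => ENNReal.ofReal (|u y| ^ p) := by fun_prop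
  refine ⟨hu.aestronglyMeasurable, ?_⟩
  rw [eLpNorm_lt_top_iff_lintegral_rpow_enorm_lt_top (by simpa using hp) ENNReal.ofReal_ne_top,
    ENNReal.toReal_ofReal hp.le]
  simp_rw [Real.enorm_eq_ofReal_abs, ENNReal.ofReal_rpow_of_nonneg (abs_nonneg _) hp.le]
  rw [Measure.lintegral_compProd hmeas, lintegral_prod _ (by
    exact (Measurable.lintegral_kernel_prod_right' hmeas).aemeasurable)]
  exact h

lemma jointExp3_eq_integral [SFinite r] [SFinite ν]
    (hf : Integrable (fun ω => f ω.1.1 ω.1.2 ω.2)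
      (iidLaw (r.prod ν) (Kernel.prodMkLeft Θ q) (Fin n))) :
    jointExp3 r ν q n f
      = ∫ ω, f ω.1.1 ω.1.2 ω.2 ∂iidLaw (r.prod ν) (Kernel.prodMkLeft Θ q) (Fin n) := by
  have hinner : Integrable
      (fun y => ∫ zs, f y.1 y.2 zs ∂iidKernel (Kernel.prodMkLeft Θ q) (Fin n) y) (r.prod ν) :=
    hf.integral_compProd
  rw [Measure.integral_compProd hf, integral_prod _ hinner]
  rfl

lemma jointExp3_sq_sub_jointExp3_le [IsProbabilityMeasure r] [IsProbabilityMeasure ν]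
    (hf : MemLp (fun ω => f ω.1.1 ω.1.2 ω.2) 2
      (iidLaw (r.prod ν) (Kernel.prodMkLeft Θ q) (Fin n))) :
    jointExp3 r ν q n (fun θ x zs => (f θ x zs - jointExp3 r ν q n f) ^ 2)
      ≤ ∫ ω, f ω.1.1 ω.1.2 ω.2 ^ 2 ∂iidLaw (r.prod ν) (Kernel.prodMkLeft Θ q) (Fin n) := by
  have hcentred := (hf.sub (memLp_const (jointExp3 r ν q n f))).integrable_sq
  calc _ = ∫ ω, (f ω.1.1 ω.1.2 ω.2 - jointExp3 r ν q n f) ^ 2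
          ∂iidLaw (r.prod ν) (Kernel.prodMkLeft Θ q) (Fin n) := jointExp3_eq_integral hcentred
    _ = Var[fun ω => f ω.1.1 ω.1.2 ω.2;
          iidLaw (r.prod ν) (Kernel.prodMkLeft Θ q) (Fin n)] := by
        rw [variance_eq_integral hf.aemeasurable,
          jointExp3_eq_integral (hf.integrable one_le_two)]
    _ ≤ _ := variance_le_expectation_sq hf.aestronglyMeasurable

end JointExpectation

section Levels

variable {Θ 𝒳 𝒵 : Type*} [MeasurableSpace Θ] [MeasurableSpace 𝒳] [MeasurableSpace 𝒵]
  {r : Measure Θ} [IsProbabilityMeasure r] {ν : Measure 𝒳} [IsProbabilityMeasure ν]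
  {q : Kernel 𝒳 𝒵} [IsMarkovKernel q] {w : Θ → 𝒳 → 𝒵 → ℝ} {s t : ℝ}

lemma two_pow_rpow (ℓ : ℕ) (a : ℝ) : ((2 ^ ℓ : ℕ) : ℝ) ^ a = 2 ^ (a * ℓ) := by
  rw [Nat.cast_pow, Nat.cast_ofNat, ← Real.rpow_natCast_mul zero_le_two, mul_comm]

lemma two_pow_sub_one_rpow_neg_le {β : ℝ} (hβ : β ≤ 2) {ℓ : ℕ} (hℓ : 1 ≤ ℓ) :
    ((2 ^ (ℓ - 1) : ℕ) : ℝ) ^ (-β) ≤ 4 * (2 : ℝ) ^ (-β * ℓ) := by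
  rw [two_pow_rpow, show (4 : ℝ) = 2 ^ (2 : ℝ) by norm_num, ← Real.rpow_add two_pos]
  refine Real.rpow_le_rpow_of_exponent_le one_le_two ?_
  push_cast [hℓ]
  linarith

theorem exists_jointExp3_sq_sub_mlmcCorrection3_le
    (hw : IsNormalizedWeight (r.prod ν) (Kernel.prodMkLeft Θ q)
      (Function.uncurry (Function.uncurry w)))
    (hs : 2 ≤ s) (ht : 2 < t) (hst : 2 * t ≤ s * (t - 2))
    (hws : MemLp (Function.uncurry (Function.uncurry w)) (ENNReal.ofReal s)
      ((r.prod ν) ⊗ₘ Kernel.prodMkLeft Θ q))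
    (hwt : MemLp (fun p => Real.log (Function.uncurry (Function.uncurry w) p)) (ENNReal.ofReal t)
      ((r.prod ν) ⊗ₘ Kernel.prodMkLeft Θ q)) :
    ∃ C : ℝ, 0 ≤ C ∧ ∀ ℓ : ℕ, 1 ≤ ℓ →
      jointExp3 r ν q (2 * 2 ^ (ℓ - 1)) (fun θ x zs =>
          (mlmcCorrection3 w (2 ^ (ℓ - 1)) θ x zs
            - jointExp3 r ν q (2 * 2 ^ (ℓ - 1)) (mlmcCorrection3 w (2 ^ (ℓ - 1)))) ^ 2)
        ≤ C * (2 : ℝ) ^ (-(min (s * (t - 2) / (2 * t)) 2) * ℓ) := by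
  obtain ⟨C, hC, hsq⟩ := exists_integral_sq_mlmcCorrection3_le hw hs ht hst hws hwt
  refine ⟨C * 4, by positivity, fun ℓ hℓ => ?_⟩
  have hn : 0 < 2 ^ (ℓ - 1) := by positivity
  have hL2 := memLp_mlmcCorrection3 hn hw (hws.mono_exponent (two_le_ofReal hs))
    (hwt.mono_exponent (two_le_ofReal ht.le))
  refine (jointExp3_sq_sub_jointExp3_le hL2).trans ((hsq _ hn).trans ?_)
  rw [mul_assoc]
  exact mul_le_mul_of_nonneg_left (two_pow_sub_one_rpow_neg_le (min_le_right _ _) hℓ) hC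

theorem exists_abs_jointExp3_log_le
    (hw : IsNormalizedWeight (r.prod ν) (Kernel.prodMkLeft Θ q)
      (Function.uncurry (Function.uncurry w)))
    (hs : 2 ≤ s) (ht : 1 < t) (hst : t ≤ s * (t - 1))
    (hws : MemLp (Function.uncurry (Function.uncurry w)) (ENNReal.ofReal s)
      ((r.prod ν) ⊗ₘ Kernel.prodMkLeft Θ q))
    (hwt : MemLp (fun p => Real.log (Function.uncurry (Function.uncurry w) p)) (ENNReal.ofReal t)
      ((r.prod ν) ⊗ₘ Kernel.prodMkLeft Θ q)) :
    ∃ C : ℝ, 0 ≤ C ∧ ∀ ℓ : ℕ,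
      |jointExp3 r ν q (2 ^ ℓ) (fun θ x zs => Real.log ((∑ k, w θ x (zs k)) / 2 ^ ℓ))|
        ≤ C * (2 : ℝ) ^ (-(min (s * (t - 1) / (2 * t)) 1) * ℓ) := by
  obtain ⟨C, hC, hlog⟩ := hw.exists_abs_integral_log_expect_le hs ht hst hws hwt
  refine ⟨C, hC, fun ℓ => ?_⟩
  have hint := hw.integrable_log_expect (ι := Fin (2 ^ ℓ)) univ_nonempty
    (hws.integrable (ENNReal.one_le_ofReal.mpr (by linarith)))
    (hwt.integrable (ENNReal.one_le_ofReal.mpr ht.le))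
  have hexpect : (fun θ x zs => Real.log ((∑ k, w θ x (zs k)) / 2 ^ ℓ))
      = fun θ x (zs : Fin (2 ^ ℓ) → 𝒵) => Real.log (𝔼 k, w θ x (zs k)) := by
    simp [Fintype.expect_eq_sum_div_card]
  rw [hexpect, jointExp3_eq_integral hint, ← two_pow_rpow]
  exact hlog _ (by positivity)

end Levels

/-- **MLMC rates for the locally marginalized evidence lower bound** (Theorem 4/appendix
Theorem of the paper).  Let `(Θ, X) ~ r ⊗ ν` and, conditionally on `(Θ, X)`, let
`Z₁, Z₂, …` be i.i.d. `~ q(·; X)`; let `w > 0` be the normalized weight,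
`∫ w(θ,x,z) q(dz;x) = 1` for a.e. `(θ,x)`, and `Ȳ_K = (1/K)∑_{k=1}^K w(Θ,X,Z_k)`.
If `E[w^s] < ∞` and `E[|log w|^t] < ∞` for some `s, t > 2` with `(s−2)(t−2) ≥ 4`, then
there is `c > 0` such that the coupled corrections satisfy `Var[Δ_ℓ] ≤ c·2^{−βℓ}` for all
`ℓ ≥ 1` with `β = min(s(t−2)/(2t), 2)`, and the bias satisfies
`|E[log Ȳ_{2^ℓ}]| ≤ c·2^{−αℓ}` for all `ℓ ≥ 0` with `α = min(s(t−1)/(2t), 1)`. -/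
theorem lmelbo_mlmc_rates
    {Θ 𝒳 𝒵 : Type*} [MeasurableSpace Θ] [MeasurableSpace 𝒳] [MeasurableSpace 𝒵]
    (r : Measure Θ) [IsProbabilityMeasure r]
    (ν : Measure 𝒳) [IsProbabilityMeasure ν]
    (q : Kernel 𝒳 𝒵) [IsMarkovKernel q]
    (w : Θ → 𝒳 → 𝒵 → ℝ)
    (hw_meas : Measurable fun p : Θ × 𝒳 × 𝒵 => w p.1 p.2.1 p.2.2)
    (hw_pos : ∀ θ x z, 0 < w θ x z)
    (hw_norm : ∀ᵐ p ∂(r.prod ν), ∫ z, w p.1 p.2 z ∂(q p.2) = 1)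
    (s t : ℝ) (hs : 2 < s) (ht : 2 < t) (hst : 4 ≤ (s - 2) * (t - 2))
    (hws : (∫⁻ θ, ∫⁻ x, ∫⁻ z, ENNReal.ofReal (w θ x z ^ s) ∂(q x) ∂ν ∂r) < ⊤)
    (hwt : (∫⁻ θ, ∫⁻ x, ∫⁻ z, ENNReal.ofReal (|Real.log (w θ x z)| ^ t) ∂(q x) ∂ν ∂r) < ⊤) :
    ∃ c > (0 : ℝ),
      (∀ ℓ : ℕ, 1 ≤ ℓ →
        jointExp3 r ν q (2 * 2 ^ (ℓ - 1)) (fun θ x zs =>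
            (mlmcCorrection3 w (2 ^ (ℓ - 1)) θ x zs
              - jointExp3 r ν q (2 * 2 ^ (ℓ - 1)) (mlmcCorrection3 w (2 ^ (ℓ - 1)))) ^ 2)
          ≤ c * (2 : ℝ) ^ (-(min (s * (t - 2) / (2 * t)) 2) * ℓ)) ∧
      (∀ ℓ : ℕ,
        |jointExp3 r ν q (2 ^ ℓ) (fun θ x zs => Real.log ((∑ k, w θ x (zs k)) / 2 ^ ℓ))|
          ≤ c * (2 : ℝ) ^ (-(min (s * (t - 1) / (2 * t)) 1) * ℓ)) := by
  set u := Function.uncurry (Function.uncurry w)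
  have hu : Measurable u := hw_meas.comp MeasurableEquiv.prodAssoc.measurable
  have hw : IsNormalizedWeight (r.prod ν) (Kernel.prodMkLeft Θ q) u :=
    ⟨hu, fun _ => hw_pos _ _ _, hw_norm⟩
  have hws' : MemLp u (ENNReal.ofReal s) ((r.prod ν) ⊗ₘ Kernel.prodMkLeft Θ q) :=
    memLp_of_lintegral_rpow_lt_top hu (by linarith) <| by
      simpa only [abs_of_pos (hw_pos _ _ _), u, Function.uncurry_apply_pair] using hws
  have hwt' : MemLp (fun p => Real.log (u p)) (ENNReal.ofReal t)
      ((r.prod ν) ⊗ₘ Kernel.prodMkLeft Θ q) :=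
    memLp_of_lintegral_rpow_lt_top hu.log (by linarith) hwt
  obtain ⟨C₁, hC₁, hvar⟩ :=
    exists_jointExp3_sq_sub_mlmcCorrection3_le hw hs.le ht (by nlinarith) hws' hwt'
  obtain ⟨C₂, hC₂, hbias⟩ :=
    exists_abs_jointExp3_log_le hw hs.le (by linarith) (by nlinarith) hws' hwt'
  refine ⟨C₁ + C₂ + 1, by linarith, fun ℓ hℓ => (hvar ℓ hℓ).trans ?_, fun ℓ => (hbias ℓ).trans ?_⟩
  all_goals gcongr; linarith
end
end

section
/- Let W_1, W_2, … be i.i.d. positive random variables such that W_1 and log W_1 are integrable, and let μ = E[W_1]. Write Ȳ_K = (1/K) Σ_{k=1}^{K} W_k. Then for every K ≥ 1, log Ȳ_K is integrable and E[log Ȳ_K] ≤ E[log Ȳ_{K+1}] ≤ log μ. That is, the expected level-K importance-sampling estimators form a nondecreasing sequence of lower bounds on log μ. -/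
open MeasureTheory ProbabilityTheory Finset

/-!
Averaging the leave-one-out means of `n + 1` points gives back the mean of all of them, so Jensen's
inequality bounds the average of `log` at the leave-one-out means by `log` at the full mean. By
exchangeability all the leave-one-out terms have the same expectation, namely the one for `n`
variables, which gives the monotonicity. The bound by `log μ`, and integrability from above, come
from a tangent of `log`; integrability from below is Jensen's inequality again. In place of `log`
one may take any concave function on an open convex set, with supporting hyperplanes as tangents.
-/

/-- The sample mean `(1 / #s) ∑ i ∈ s, x i` of a family of vectors over a finite set `s` of
indices; it is `0` if `s` is empty. -/
noncomputable def sampleMean {ι E : Type*} [AddCommGroup E] [Module ℝ E]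
    (s : Finset ι) (x : ι → E) : E :=
  (#s : ℝ)⁻¹ • ∑ i ∈ s, x i

/-- A family of random variables is exchangeable if the joint law of `n` distinct members depends
only on `n`. For a sequence this is invariance of the law under finite permutations; comparing
arbitrary injections avoids extending them to permutations of the index type. -/
def Exchangeable {ι Ω E : Type*} [MeasurableSpace Ω] [MeasurableSpace E]
    (X : ι → Ω → E) (P : Measure Ω) : Prop :=
  ∀ (n : ℕ) (e f : Fin n ↪ ι),
    IdentDistrib (fun ω k ↦ X (e k) ω) (fun ω k ↦ X (f k) ω) P P

section SampleMean

variable {ι E : Type*} [AddCommGroup E] [Module ℝ E] {s : Finset ι} {C : Set E} {φ : E → ℝ}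
  {x : ι → E}

lemma sampleMean_const (hs : s.Nonempty) (a : E) : sampleMean s (fun _ ↦ a) = a := by
  have hcard : (#s : ℝ) ≠ 0 := by exact_mod_cast hs.card_ne_zero
  rw [sampleMean, sum_const, ← Nat.cast_smul_eq_nsmul ℝ, inv_smul_smul₀ hcard]

lemma sampleMean_eq_sum_smul : sampleMean s x = ∑ i ∈ s, (#s : ℝ)⁻¹ • x i :=
  smul_sum

lemma sampleMean_eq_sum_div (s : Finset ι) (x : ι → ℝ) :
    sampleMean s x = (∑ i ∈ s, x i) / #s :=
  inv_mul_eq_div _ _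

lemma sampleMean_mem_of_convex (hC : Convex ℝ C) (hs : s.Nonempty) (hx : ∀ i ∈ s, x i ∈ C) :
    sampleMean s x ∈ C := by
  rw [sampleMean_eq_sum_smul]
  exact hC.sum_mem (fun _ _ ↦ by positivity) (by simp [hs.card_ne_zero]) hx

lemma sampleMean_comp_le_of_concaveOn (hφ : ConcaveOn ℝ C φ) (hs : s.Nonempty)
    (hx : ∀ i ∈ s, x i ∈ C) : sampleMean s (fun i ↦ φ (x i)) ≤ φ (sampleMean s x) := by
  simp only [sampleMean_eq_sum_smul]
  exact hφ.le_map_sum (fun _ _ ↦ by positivity) (by simp [hs.card_ne_zero]) hx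

lemma sampleMean_sampleMean_erase [DecidableEq ι] (hs : s.Nontrivial) (x : ι → E) :
    sampleMean s (fun j ↦ sampleMean (s.erase j) x) = sampleMean s x := by
  have hcard : (#s : ℝ) - 1 ≠ 0 := by
    have : (1 : ℝ) < #s := by exact_mod_cast one_lt_card_iff_nontrivial.2 hs
    linarith
  have leave_one_out : ∀ j ∈ s,
      sampleMean (s.erase j) x = ((#s : ℝ) - 1)⁻¹ • (∑ i ∈ s, x i - x j) := fun j hj ↦ by
    rw [sampleMean, sum_erase_eq_sub hj, cast_card_erase_of_mem hj]
  have total : ∑ j ∈ s, (∑ i ∈ s, x i - x j) = ((#s : ℝ) - 1) • ∑ i ∈ s, x i := by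
    rw [sum_sub_distrib, sum_const, sub_smul, one_smul, Nat.cast_smul_eq_nsmul]
  rw [sampleMean, sum_congr rfl leave_one_out, ← smul_sum, total, inv_smul_smul₀ hcard, sampleMean]

lemma sampleMean_comp_sampleMean_erase_le [DecidableEq ι] (hφ : ConcaveOn ℝ C φ)
    (hs : s.Nontrivial) (hx : ∀ i ∈ s, x i ∈ C) :
    sampleMean s (fun j ↦ φ (sampleMean (s.erase j) x)) ≤ φ (sampleMean s x) := by
  rw [← sampleMean_sampleMean_erase hs x]
  refine sampleMean_comp_le_of_concaveOn hφ hs.nonempty fun j hj ↦ ?_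
  exact sampleMean_mem_of_convex hφ.1 ((erase_nonempty hj).2 hs)
    fun i hi ↦ hx i (mem_of_mem_erase hi)

end SampleMean

lemma isOpen_strict_hypograph {E : Type*} [TopologicalSpace E] {C : Set E} {φ : E → ℝ}
    (hCo : IsOpen C) (hφ : ContinuousOn φ C) : IsOpen {p : E × ℝ | p.1 ∈ C ∧ p.2 < φ p.1} := by
  have hdiff : ContinuousOn (fun p : E × ℝ ↦ φ p.1 - p.2) (Prod.fst ⁻¹' C) :=
    (hφ.comp continuousOn_fst fun _ hp ↦ hp).sub continuousOn_snd
  have hpos : IsOpen (Set.Ioi (0 : ℝ)) := isOpen_Ioi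
  convert hdiff.isOpen_inter_preimage (hCo.preimage continuous_fst) hpos using 1
  ext p
  simp

-- Separate the point `(m, φ m)` from the open convex strict hypograph of `φ`.
lemma exists_supergradient_of_concaveOn {E : Type*} [NormedAddCommGroup E] [NormedSpace ℝ E]
    {C : Set E} {φ : E → ℝ} (hCo : IsOpen C) (hφ : ConcaveOn ℝ C φ)
    (hφc : ContinuousOn φ C) {m : E} (hm : m ∈ C) :
    ∃ g : E →L[ℝ] ℝ, ∀ y ∈ C, φ y ≤ φ m + g (y - m) := by
  obtain ⟨f, hf⟩ := geometric_hahn_banach_open_point hφ.convex_strict_hypograph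
    (isOpen_strict_hypograph hCo hφc) (x := (m, φ m)) (by simp)
  let u : E →L[ℝ] ℝ := f.comp (.inl ℝ E ℝ)
  let c := f (0, 1)
  have f_apply : ∀ y t, f (y, t) = u y + t * c := fun y t ↦ by
    have : (y, t) = (y, (0 : ℝ)) + t • ((0 : E), (1 : ℝ)) := by simp
    rw [this, map_add, map_smul, smul_eq_mul]
    rfl
  have separated : ∀ y ∈ C, ∀ t < φ y, u y + t * c < u m + φ m * c := fun y hy t ht ↦ by
    simpa only [f_apply] using hf (y, t) ⟨hy, ht⟩
  have hc : 0 < c := by linarith [separated m hm (φ m - 1) (by linarith)]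
  refine ⟨-c⁻¹ • u, fun y hy ↦ le_of_forall_lt_imp_le_of_dense fun t ht ↦ ?_⟩
  have hsep := separated y hy t ht
  have : t - φ m ≤ (u m - u y) / c := (le_div_iff₀ hc).2 (by linarith)
  calc t ≤ φ m + (u m - u y) / c := by linarith
    _ = φ m + (-c⁻¹ • u) (y - m) := by
      simp only [smul_apply, map_sub, smul_eq_mul]
      ring

lemma aemeasurable_map_of_continuousOn {Ω E : Type*} [MeasurableSpace Ω] {P : Measure Ω}
    [TopologicalSpace E] [MeasurableSpace E] [OpensMeasurableSpace E] {C : Set E} {φ : E → ℝ}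
    {Y : Ω → E} (hC : MeasurableSet C) (hφc : ContinuousOn φ C) (hYm : AEMeasurable Y P)
    (hY : ∀ᵐ ω ∂P, Y ω ∈ C) : AEMeasurable φ (P.map Y) := by
  rw [← Measure.restrict_eq_self_of_ae_mem ((ae_map_iff hYm hC).2 hY)]
  exact hφc.aemeasurable hC

section Jensen

variable {Ω E : Type*} [MeasurableSpace Ω] {P : Measure Ω} [NormedAddCommGroup E]
  [NormedSpace ℝ E] {C : Set E} {φ : E → ℝ} {Y : Ω → E}

lemma integral_mem_of_isOpen [CompleteSpace E] [IsProbabilityMeasure P] (hC : Convex ℝ C)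
    (hCo : IsOpen C) (hY : ∀ᵐ ω ∂P, Y ω ∈ C) (hYint : Integrable Y P) : ∫ ω, Y ω ∂P ∈ C := by
  by_contra hmean
  obtain ⟨f, hf⟩ := geometric_hahn_banach_open_point hC hCo hmean
  have hfY : Integrable (fun ω ↦ f (Y ω)) P := f.integrable_comp hYint
  have hgap : ∀ᵐ ω ∂P, 0 < f (∫ ω, Y ω ∂P) - f (Y ω) :=
    hY.mono fun ω hω ↦ sub_pos.2 (hf _ hω)
  have hzero : ∫ ω, (f (∫ ω, Y ω ∂P) - f (Y ω)) ∂P = 0 := by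
    rw [integral_sub (integrable_const _) hfY, integral_const, probReal_univ, one_smul,
      f.integral_comp_comm hYint, sub_self]
  have hae := (integral_eq_zero_iff_of_nonneg_ae (hgap.mono fun _ h ↦ h.le)
    ((integrable_const _).sub hfY)).1 hzero
  obtain ⟨ω, hpos, heq⟩ := (hgap.and hae).exists
  exact hpos.ne' heq

lemma integral_comp_le_of_concaveOn_of_isOpen [CompleteSpace E] [IsProbabilityMeasure P]
    (hCo : IsOpen C) (hφ : ConcaveOn ℝ C φ) (hφc : ContinuousOn φ C) (hY : ∀ᵐ ω ∂P, Y ω ∈ C)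
    (hYint : Integrable Y P) (hφY : Integrable (fun ω ↦ φ (Y ω)) P) :
    ∫ ω, φ (Y ω) ∂P ≤ φ (∫ ω, Y ω ∂P) := by
  set m := ∫ ω, Y ω ∂P with hm
  obtain ⟨g, hg⟩ := exists_supergradient_of_concaveOn hCo hφ hφc
    (integral_mem_of_isOpen hφ.1 hCo hY hYint)
  have hcentred : Integrable (fun ω ↦ Y ω - m) P := hYint.sub (integrable_const m)
  calc ∫ ω, φ (Y ω) ∂P ≤ ∫ ω, (φ m + g (Y ω - m)) ∂P :=
        integral_mono_ae hφY ((integrable_const _).add (g.integrable_comp hcentred))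
          (hY.mono fun ω hω ↦ hg _ hω)
    _ = φ m + g (∫ ω, (Y ω - m) ∂P) := by
        rw [integral_add (integrable_const _) (g.integrable_comp hcentred),
          g.integral_comp_comm hcentred, integral_const, probReal_univ, one_smul]
    _ = φ m := by
        rw [integral_sub hYint (integrable_const m), integral_const, probReal_univ, one_smul,
          ← hm, sub_self, map_zero, add_zero]

lemma integrable_comp_of_concaveOn [IsFiniteMeasure P] [MeasurableSpace E] [BorelSpace E]
    (hCo : IsOpen C) (hφ : ConcaveOn ℝ C φ) (hφc : ContinuousOn φ C)
    (hY : ∀ᵐ ω ∂P, Y ω ∈ C) (hYint : Integrable Y P) {L : Ω → ℝ} (hL : Integrable L P)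
    (hLφ : ∀ᵐ ω ∂P, L ω ≤ φ (Y ω)) : Integrable (fun ω ↦ φ (Y ω)) P := by
  obtain rfl | ⟨m, hm⟩ := C.eq_empty_or_nonempty
  · have hP : P = 0 := by simpa using hY
    simp [hP]
  obtain ⟨g, hg⟩ := exists_supergradient_of_concaveOn hCo hφ hφc hm
  have hYm := hYint.aemeasurable
  have hφYm : AEMeasurable (fun ω ↦ φ (Y ω)) P :=
    (aemeasurable_map_of_continuousOn hCo.measurableSet hφc hYm hY).comp_aemeasurable hYm
  exact integrable_of_le_of_le hφYm.aestronglyMeasurable hLφ (hY.mono fun ω hω ↦ hg _ hω) hL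
    ((integrable_const _).add (g.integrable_comp (hYint.sub (integrable_const m))))

end Jensen

section SampleMeanOfRandomVariables

variable {ι Ω E : Type*} [MeasurableSpace Ω] {P : Measure Ω} [NormedAddCommGroup E]
  [NormedSpace ℝ E] {X : ι → Ω → E} {s : Finset ι} {C : Set E} {φ : E → ℝ}

lemma integrable_sampleMean (hX : ∀ i ∈ s, Integrable (X i) P) :
    Integrable (fun ω ↦ sampleMean s (X · ω)) P :=
  (integrable_finsetSum s hX).smul _

lemma integral_sampleMean (hX : ∀ i ∈ s, Integrable (X i) P) :
    ∫ ω, sampleMean s (X · ω) ∂P = sampleMean s (fun i ↦ ∫ ω, X i ω ∂P) := by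
  simp only [sampleMean]
  rw [integral_smul, integral_finsetSum s hX]

lemma ae_sampleMean_mem_of_convex (hC : Convex ℝ C) (hs : s.Nonempty)
    (hmem : ∀ i ∈ s, ∀ᵐ ω ∂P, X i ω ∈ C) : ∀ᵐ ω ∂P, sampleMean s (X · ω) ∈ C :=
  (s.eventually_all.2 hmem).mono fun _ hω ↦ sampleMean_mem_of_convex hC hs hω

lemma integrable_comp_sampleMean_of_concaveOn [IsFiniteMeasure P] [MeasurableSpace E]
    [BorelSpace E] (hCo : IsOpen C) (hφ : ConcaveOn ℝ C φ)
    (hφc : ContinuousOn φ C) (hs : s.Nonempty) (hmem : ∀ i ∈ s, ∀ᵐ ω ∂P, X i ω ∈ C)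
    (hint : ∀ i ∈ s, Integrable (X i) P) (hφint : ∀ i ∈ s, Integrable (fun ω ↦ φ (X i ω)) P) :
    Integrable (fun ω ↦ φ (sampleMean s (X · ω))) P :=
  integrable_comp_of_concaveOn hCo hφ hφc (ae_sampleMean_mem_of_convex hφ.1 hs hmem)
    (integrable_sampleMean hint) (integrable_sampleMean hφint)
    ((s.eventually_all.2 hmem).mono fun _ hω ↦ sampleMean_comp_le_of_concaveOn hφ hs hω)

end SampleMeanOfRandomVariables

lemma exchangeable_of_iIndepFun {ι Ω E : Type*} [MeasurableSpace Ω] [MeasurableSpace E]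
    {P : Measure Ω} {X : ι → Ω → E} (hindep : iIndepFun X P)
    (hident : ∀ i j, IdentDistrib (X i) (X j) P P) : Exchangeable X P := fun _ e f ↦
  IdentDistrib.pi (fun k ↦ hident (e k) (f k)) (hindep.precomp e.injective)
    (hindep.precomp f.injective)

namespace Exchangeable

variable {ι Ω E : Type*} [MeasurableSpace Ω] [MeasurableSpace E] {P : Measure Ω} {X : ι → Ω → E}

lemma identDistrib (hX : Exchangeable X P) (i j : ι) : IdentDistrib (X i) (X j) P P :=
  (hX 1 ⟨fun _ ↦ i, Function.injective_of_subsingleton _⟩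
    ⟨fun _ ↦ j, Function.injective_of_subsingleton _⟩).comp (measurable_pi_apply 0)

lemma identDistrib_sampleMean [AddCommGroup E] [Module ℝ E] [MeasurableAdd₂ E]
    [MeasurableConstSMul ℝ E] (hX : Exchangeable X P) {s t : Finset ι} (hst : #s = #t) :
    IdentDistrib (fun ω ↦ sampleMean s (X · ω)) (fun ω ↦ sampleMean t (X · ω)) P P := by
  let enum (r : Finset ι) (hr : #r = #t) : Fin #t ↪ ι :=
    (r.equivFinOfCardEq hr).symm.toEmbedding.trans (.subtype _)
  have sampleMean_enum : ∀ (r : Finset ι) (hr : #r = #t) (x : ι → E),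
      sampleMean univ (fun k ↦ x (enum r hr k)) = sampleMean r x := fun r hr x ↦ by
    rw [sampleMean, sampleMean, card_univ, Fintype.card_fin, hr, ← sum_coe_sort r x,
      ← (r.equivFinOfCardEq hr).symm.sum_comp fun i ↦ x i]
    rfl
  have hmeas : Measurable fun v : Fin #t → E ↦ sampleMean univ v :=
    (Finset.measurable_fun_sum _ fun k _ ↦ measurable_pi_apply k).const_smul _
  have hident := (hX #t (enum s hst) (enum t rfl)).comp hmeas
  simp only [Function.comp_def] at hident
  convert hident using 2 with ω ω
  · exact (sampleMean_enum s hst (X · ω)).symm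
  · exact (sampleMean_enum t rfl (X · ω)).symm

section Concave

variable [NormedAddCommGroup E] [NormedSpace ℝ E] [BorelSpace E] [SecondCountableTopology E]
  {C : Set E} {φ : E → ℝ} {s t : Finset ι}

lemma integral_comp_sampleMean_eq_of_card_eq (hX : Exchangeable X P) (hC : Convex ℝ C)
    (hCo : IsOpen C) (hφc : ContinuousOn φ C) (hmem : ∀ i ∈ s, ∀ᵐ ω ∂P, X i ω ∈ C)
    (hs : s.Nonempty) (hst : #s = #t) :
    ∫ ω, φ (sampleMean s (X · ω)) ∂P = ∫ ω, φ (sampleMean t (X · ω)) ∂P := by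
  have hident := hX.identDistrib_sampleMean hst
  exact (hident.comp_of_aemeasurable <| aemeasurable_map_of_continuousOn hCo.measurableSet hφc
    hident.aemeasurable_fst (ae_sampleMean_mem_of_convex hC hs hmem)).integral_eq

lemma integral_comp_sampleMean_erase_le [DecidableEq ι] (hX : Exchangeable X P) (hCo : IsOpen C)
    (hφ : ConcaveOn ℝ C φ) (hφc : ContinuousOn φ C) (hmem : ∀ i ∈ s, ∀ᵐ ω ∂P, X i ω ∈ C)
    (hint : ∀ r ⊆ s, r.Nonempty → Integrable (fun ω ↦ φ (sampleMean r (X · ω))) P)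
    (hs : s.Nontrivial) {j : ι} (hj : j ∈ s) :
    ∫ ω, φ (sampleMean (s.erase j) (X · ω)) ∂P ≤ ∫ ω, φ (sampleMean s (X · ω)) ∂P := by
  have nonempty_erase : ∀ k ∈ s, (s.erase k).Nonempty := fun k hk ↦ (erase_nonempty hk).2 hs
  have same_integral : ∀ k ∈ s, ∫ ω, φ (sampleMean (s.erase k) (X · ω)) ∂P =
      ∫ ω, φ (sampleMean (s.erase j) (X · ω)) ∂P := fun k hk ↦
    hX.integral_comp_sampleMean_eq_of_card_eq hφ.1 hCo hφc
      (fun i hi ↦ hmem i (mem_of_mem_erase hi)) (nonempty_erase k hk)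
      (by rw [card_erase_of_mem hk, card_erase_of_mem hj])
  have hint_erase : ∀ k ∈ s, Integrable (fun ω ↦ φ (sampleMean (s.erase k) (X · ω))) P :=
    fun k hk ↦ hint _ (erase_subset k s) (nonempty_erase k hk)
  calc ∫ ω, φ (sampleMean (s.erase j) (X · ω)) ∂P
      = sampleMean s (fun k ↦ ∫ ω, φ (sampleMean (s.erase k) (X · ω)) ∂P) := by
        rw [sampleMean, sum_congr rfl same_integral]
        exact (sampleMean_const hs.nonempty _).symm
    _ = ∫ ω, sampleMean s (fun k ↦ φ (sampleMean (s.erase k) (X · ω))) ∂P :=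
        (integral_sampleMean hint_erase).symm
    _ ≤ ∫ ω, φ (sampleMean s (X · ω)) ∂P := by
        refine integral_mono_ae (integrable_sampleMean hint_erase)
          (hint s subset_rfl hs.nonempty) ?_
        filter_upwards [s.eventually_all.2 hmem] with ω hω
        exact sampleMean_comp_sampleMean_erase_le hφ hs hω

lemma integral_comp_sampleMean_le_of_card_le (hX : Exchangeable X P) (hCo : IsOpen C)
    (hφ : ConcaveOn ℝ C φ) (hφc : ContinuousOn φ C) (hmem : ∀ i ∈ t, ∀ᵐ ω ∂P, X i ω ∈ C)
    (hint : ∀ r ⊆ t, r.Nonempty → Integrable (fun ω ↦ φ (sampleMean r (X · ω))) P)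
    (hs : s.Nonempty) (hst : #s ≤ #t) :
    ∫ ω, φ (sampleMean s (X · ω)) ∂P ≤ ∫ ω, φ (sampleMean t (X · ω)) ∂P := by
  classical
  induction t using Finset.strongInduction with
  | H t ih =>
    obtain hlt | heq := hst.lt_or_eq
    · have ht : t.Nontrivial := one_lt_card_iff_nontrivial.1 (Nat.lt_of_le_of_lt hs.card_pos hlt)
      obtain ⟨j, hj⟩ := ht.nonempty
      have hle_erase : #s ≤ #(t.erase j) := by
        rw [card_erase_of_mem hj]
        lia
      calc ∫ ω, φ (sampleMean s (X · ω)) ∂P ≤ ∫ ω, φ (sampleMean (t.erase j) (X · ω)) ∂P :=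
            ih _ (erase_ssubset hj) (fun i hi ↦ hmem i (mem_of_mem_erase hi))
              (fun r hr ↦ hint r (hr.trans (erase_subset j t))) hle_erase
        _ ≤ ∫ ω, φ (sampleMean t (X · ω)) ∂P :=
            hX.integral_comp_sampleMean_erase_le hCo hφ hφc hmem hint ht hj
    · have ht : t.Nonempty := card_pos.1 (heq ▸ hs.card_pos)
      exact (hX.integral_comp_sampleMean_eq_of_card_eq hφ.1 hCo hφc hmem ht heq.symm).ge

end Concave

end Exchangeable

theorem log_sample_mean_monotone_general {ι Ω E : Type*} [MeasurableSpace Ω] {P : Measure Ω}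
    [IsProbabilityMeasure P] [NormedAddCommGroup E] [NormedSpace ℝ E] [CompleteSpace E]
    [MeasurableSpace E] [BorelSpace E] [SecondCountableTopology E]
    {X : ι → Ω → E} (hX : Exchangeable X P) {C : Set E} (hCo : IsOpen C) {φ : E → ℝ}
    (hφ : ConcaveOn ℝ C φ) (hφc : ContinuousOn φ C) {i₀ : ι} (hmem : ∀ᵐ ω ∂P, X i₀ ω ∈ C)
    (hint : Integrable (X i₀) P) (hφint : Integrable (fun ω ↦ φ (X i₀ ω)) P)
    {s t : Finset ι} (hs : s.Nonempty) (hst : #s ≤ #t) :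
    Integrable (fun ω ↦ φ (sampleMean s (X · ω))) P ∧
      ∫ ω, φ (sampleMean s (X · ω)) ∂P ≤ ∫ ω, φ (sampleMean t (X · ω)) ∂P ∧
      ∫ ω, φ (sampleMean t (X · ω)) ∂P ≤ φ (∫ ω, X i₀ ω ∂P) := by
  have hident : ∀ i, IdentDistrib (X i₀) (X i) P P := hX.identDistrib i₀
  have hmem' : ∀ i, ∀ᵐ ω ∂P, X i ω ∈ C := fun i ↦ (hident i).ae_mem_snd hCo.measurableSet hmem
  have hint' : ∀ i, Integrable (X i) P := fun i ↦ (hident i).integrable_snd hint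
  have hφint' : ∀ i, Integrable (fun ω ↦ φ (X i ω)) P := fun i ↦
    ((hident i).comp_of_aemeasurable <| aemeasurable_map_of_continuousOn hCo.measurableSet hφc
      hint.aemeasurable hmem).integrable_snd hφint
  have hφmean : ∀ r : Finset ι, r.Nonempty →
      Integrable (fun ω ↦ φ (sampleMean r (X · ω))) P := fun r hr ↦
    integrable_comp_sampleMean_of_concaveOn hCo hφ hφc hr
      (fun i _ ↦ hmem' i) (fun i _ ↦ hint' i) fun i _ ↦ hφint' i
  have ht : t.Nonempty := card_pos.1 (hs.card_pos.trans_le hst)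
  have hmean : ∫ ω, sampleMean t (X · ω) ∂P = ∫ ω, X i₀ ω ∂P := by
    rw [integral_sampleMean fun i _ ↦ hint' i]
    simp only [← (hident _).integral_eq, sampleMean_const ht]
  refine ⟨hφmean s hs, hX.integral_comp_sampleMean_le_of_card_le hCo hφ hφc (fun i _ ↦ hmem' i)
    (fun r _ ↦ hφmean r) hs hst, ?_⟩
  rw [← hmean]
  exact integral_comp_le_of_concaveOn_of_isOpen hCo hφ hφc
    (ae_sampleMean_mem_of_convex hφ.1 ht fun i _ ↦ hmem' i)
    (integrable_sampleMean fun i _ ↦ hint' i) (hφmean t ht)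

/-- **Monotonicity of the importance-weighted lower bounds** (Burda–Grosse–Salakhutdinov).
Let `W 1, W 2, …` be i.i.d. positive random variables such that `W 1` and `log W 1` are
integrable, with mean `μ`, and let `Ȳ K` be the sample mean of the first `K` of them.
Then each `log Ȳ K` is integrable and the expected level-`K` importance-sampling
estimators `E[log Ȳ K]` form a nondecreasing sequence of lower bounds on `log μ`:
`E[log Ȳ K] ≤ E[log Ȳ (K+1)] ≤ log μ`. -/
theorem log_sample_mean_monotone
    {Ω : Type*} [MeasurableSpace Ω] (P : Measure Ω) [IsProbabilityMeasure P]
    (W : ℕ → Ω → ℝ) (hmeas : ∀ i, Measurable (W i))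
    (hindep : iIndepFun W P)
    (hident : ∀ i, IdentDistrib (W i) (W 0) P P)
    (hpos : ∀ i, ∀ᵐ ω ∂P, 0 < W i ω)
    (hint : Integrable (W 0) P)
    (hlogint : Integrable (fun ω => Real.log (W 0 ω)) P)
    (μ : ℝ) (hμ : μ = ∫ ω, W 0 ω ∂P) :
    ∀ K : ℕ, 1 ≤ K →
      Integrable (fun ω => Real.log ((∑ i ∈ range K, W i ω) / K)) P ∧
      (∫ ω, Real.log ((∑ i ∈ range K, W i ω) / K) ∂P)
        ≤ ∫ ω, Real.log ((∑ i ∈ range (K + 1), W i ω) / (K + 1)) ∂P ∧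
      (∫ ω, Real.log ((∑ i ∈ range (K + 1), W i ω) / (K + 1)) ∂P) ≤ Real.log μ := by
  intro K hK
  simpa only [sampleMean_eq_sum_div, card_range, Nat.cast_succ, ← hμ] using
    log_sample_mean_monotone_general
      (exchangeable_of_iIndepFun hindep fun i j ↦ (hident i).trans (hident j).symm) isOpen_Ioi
      strictConcaveOn_log_Ioi.concaveOn (strictConcaveOn_log_Ioi.concaveOn.continuousOn isOpen_Ioi)
      (hpos 0) hint hlogint (nonempty_range_iff.2 (by lia : K ≠ 0))
      (card_le_card (range_subset_range.2 K.le_succ))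
end
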